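/- arXiv:1402.2085 — 4 statements merged into one kernel-verified Lean document; each statement's English description precedes it below -/
import Mathlib

section
/- Let 0 ≤ λ < λ₀ and let p_n denote, for n large enough, the unique monic polynomial of degree n with ∫_{−1}^{1} p_n(x) x^k e^{i n λ x} dx = 0 for k = 0,…,n−1. Then for every fixed k ∈ ℕ, the normalized power sums of the roots of p_n (counted with multiplicity) converge: (1/n)·Σ_{ζ : p_n(ζ)=0} ζ^k → ∫_{−1}^{1} x^k · (2 + iλx)/(2π·√(1 − x²)) dx as n → ∞. (This expresses the weak-* convergence of the normalized zero counting measures of p_n to the equilibrium measure μ_λ via its moments.) -/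
/-!
Write `ω = nλ` and pass to the disc variable `t` with `x = (t + t⁻¹)/2`. By orthogonality the Fourier
series of `p(cos θ) exp (iω cos θ) |sin θ|` contains only frequencies of modulus at least `n`, so on
the unit circle it equals `t ^ n B(t) + t⁻¹ ^ n B(t⁻¹)` with `B` analytic in the disc
(`weighted_series`). With `ρ(t) = (1 - t ^ 2) ^ (1 / 2)`, put
`y = B exp (-iωt/2) / ρ`, `Y = ½ exp (iωt/2) t ^ n p((t + t⁻¹)/2) ρ` and
`Φ = t ^ (2n) exp (iω(t - t⁻¹)/2)`. The functions `y` and `Y` are analytic in the disc and continuous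
on its closure, and `y(t⁻¹) = Y(t) ± i t Φ(t) y(t)` on the upper, respectively lower, unit semicircle.

Testing this relation against Cauchy kernels expresses `y(w) - Y(0)` and `y(0) - Y(w)` as integrals
of `i t Φ y` over the two semicircles with opposite signs. These are deformed onto the real cuts
`[r, 1]`, `[-1, -r]` and the circle `|t| = r`. On the circle `|Φ| ≤ (r ^ 2 exp (λ(r + 1/r)/2)) ^ n`,
and the condition `λ < λ₀` is exactly what provides an `r` for which this decays (`exists_radius`).
On the cuts `|Φ(s)| = |s| ^ (2n) ≤ s ^ 2`, and there `(1 - s²)^{-1/2}` is a strict supersolution of the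
resulting integral inequality (`supersolution`), so the maximum of `|y(s)| √(1 - s²)` is at most a
multiple of `|Y(0)|`, up to a small error. The outcome (`apriori`) is `|Y(t)| ≤ C |Y(0)|` for
`|t| ≤ r/2`, with `C` independent of `n`.

Consequently `exp (iωt/2) ∏ (1 - 2ζt + t²)`, the product over the roots `ζ` of `p`, is bounded near
`0` uniformly in `n` (`rootProd_bound`) and has the value `1` at `0`. Cauchy's estimates bound each
Taylor coefficient of its logarithmic derivative `iω/2 - 2 ∑_j (∑_ζ T_{j+1}(ζ)) t ^ j`, uniformly in
`n`. Dividing by `n` gives the limits of the normalized Chebyshev sums of the roots, which are the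
Chebyshev moments of the equilibrium measure, and the three-term recursion of the Chebyshev
polynomials converts them into power sums.
-/

/-- The function `h(λ) = 2·log((2 + √(λ² + 4))/λ) − √(λ² + 4)` for `λ > 0`. -/
noncomputable def h (l : ℝ) : ℝ :=
  2 * Real.log ((2 + Real.sqrt (l ^ 2 + 4)) / l) - Real.sqrt (l ^ 2 + 4)

/-- `p` is the `n`-th monic orthogonal polynomial for the oscillatory weight `e^{iωx}`
on `[−1,1]`. -/
def IsOrthoPoly (ω : ℝ) (n : ℕ) (p : Polynomial ℂ) : Prop :=
  p.Monic ∧ p.natDegree = n ∧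
  ∀ k < n, (∫ x in (-1 : ℝ)..1,
    p.eval (x : ℂ) * (x : ℂ) ^ k * Complex.exp (Complex.I * ω * x)) = 0

section

open Complex MeasureTheory Set

/-! ### Contour deformation in the annulus -/

/-- Cauchy's theorem on half of an annulus, in logarithmic coordinates. -/
lemma half_annulus_bound (G : ℂ → ℂ) (r δ : ℝ) (hr0 : 0 < r) (hr1 : r < 1) (m : ℝ)
    (hc : ContinuousOn G {t | r ≤ ‖t‖ ∧ ‖t‖ ≤ 1})
    (hd : DifferentiableOn ℂ G {t | r < ‖t‖ ∧ ‖t‖ < 1})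
    (hδ : ∀ t, ‖t‖ = r → ‖G t‖ ≤ δ) :
    ‖∫ θ in m..(m + Real.pi), G (exp (θ * I))‖ ≤
      (∫ x in (Real.log r)..0, ‖G (exp (x + m * I))‖) +
      (∫ x in (Real.log r)..0, ‖G (exp (x + (m + Real.pi) * I))‖) + δ * Real.pi := by
  have hlog : Real.log r < 0 := Real.log_neg hr0 hr1
  have hpi := Real.pi_pos
  have key := Complex.integral_boundary_rect_eq_zero_of_continuousOn_of_differentiableOn
    (fun w => G (exp w)) (Real.log r + m * I) (0 + (m + Real.pi : ℝ) * I)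
    (by
      refine hc.comp continuous_exp.continuousOn ?_
      intro w hw
      have h1 := hw.1
      simp only [add_re, ofReal_re, mul_re, I_re, mul_zero, ofReal_im, I_im, mul_one, sub_self,
        add_zero, zero_re, Set.mem_preimage] at h1
      rw [Set.uIcc_of_le hlog.le] at h1
      simp only [Set.mem_ofPred_eq, norm_exp]
      refine ⟨?_, ?_⟩
      · rw [← Real.log_le_iff_le_exp hr0]; exact h1.1
      · rw [Real.exp_le_one_iff]; exact h1.2)
    (by
      refine hd.comp differentiable_exp.differentiableOn ?_
      intro w hw
      have h1 := hw.1
      simp only [add_re, ofReal_re, mul_re, I_re, mul_zero, ofReal_im, I_im, mul_one, sub_self,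
        add_zero, zero_re, Set.mem_preimage] at h1
      rw [min_eq_left hlog.le, max_eq_right hlog.le] at h1
      simp only [Set.mem_ofPred_eq, norm_exp]
      refine ⟨?_, ?_⟩
      · rw [← Real.log_lt_iff_lt_exp hr0]; exact h1.1
      · rw [Real.exp_lt_one_iff]; exact h1.2)
  simp only [add_re, ofReal_re, mul_re, I_re, mul_zero, ofReal_im, I_im, mul_one, sub_self,
    add_zero, add_im, mul_im, zero_add, ofReal_zero, smul_eq_mul] at key
  have e1 : I * ∫ θ in m..(m + Real.pi), G (exp (θ * I)) =
      -(∫ x in (Real.log r)..0, G (exp (x + m * I)))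
      + (∫ x in (Real.log r)..0, G (exp (x + (m + Real.pi) * I)))
      + I * ∫ θ in m..(m + Real.pi), G (exp (Real.log r + θ * I)) := by
    push_cast at key ⊢
    linear_combination key
  have e2 : ‖∫ θ in m..(m + Real.pi), G (exp (θ * I))‖
      = ‖I * ∫ θ in m..(m + Real.pi), G (exp (θ * I))‖ := by simp
  rw [e2, e1]
  have b1 := intervalIntegral.norm_integral_le_integral_norm
    (f := fun x : ℝ => G (exp (x + m * I))) (μ := volume) hlog.le
  have b2 := intervalIntegral.norm_integral_le_integral_norm
    (f := fun x : ℝ => G (exp (x + (m + Real.pi) * I))) (μ := volume) hlog.le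
  have b3 : ‖∫ θ in m..(m + Real.pi), G (exp (Real.log r + θ * I))‖ ≤ δ * Real.pi := by
    have := intervalIntegral.norm_integral_le_of_norm_le_const (a := m) (b := m + Real.pi) (C := δ)
      (f := fun θ : ℝ => G (exp (Real.log r + θ * I))) (by
        intro x _
        apply hδ
        simp [norm_exp, Real.exp_log hr0])
    simpa [abs_of_pos hpi] using this
  calc _ ≤ ‖-(∫ x in (Real.log r)..0, G (exp (x + m * I)))‖
      + ‖(∫ x in (Real.log r)..0, G (exp (x + (m + Real.pi) * I)))‖
      + ‖I * ∫ θ in m..(m + Real.pi), G (exp (Real.log r + θ * I))‖ := norm_add₃_le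
    _ ≤ _ := by
      rw [norm_neg, norm_mul, norm_I, one_mul]
      gcongr

/-- The signed circle integral (`+` over the upper, `-` over the lower semicircle) is controlled by
the two real cuts and the inner circle. -/
lemma signed_circle_bound (G : ℂ → ℂ) (r δ : ℝ) (hr0 : 0 < r) (hr1 : r < 1)
    (hc : ContinuousOn G {t | r ≤ ‖t‖ ∧ ‖t‖ ≤ 1})
    (hd : DifferentiableOn ℂ G {t | r < ‖t‖ ∧ ‖t‖ < 1})
    (hδ : ∀ t, ‖t‖ = r → ‖G t‖ ≤ δ) :
    ‖(∫ θ in (0 : ℝ)..Real.pi, G (exp (θ * I))) - ∫ θ in Real.pi..(2 * Real.pi), G (exp (θ * I))‖ ≤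
      2 * (∫ x in (Real.log r)..0, (‖G (Real.exp x : ℝ)‖ + ‖G (-(Real.exp x : ℝ))‖))
        + 2 * (δ * Real.pi) := by
  have h1 := half_annulus_bound G r δ hr0 hr1 0 hc hd hδ
  have h2 := half_annulus_bound G r δ hr0 hr1 Real.pi hc hd hδ
  rw [← two_mul] at h2
  have hlog : Real.log r < 0 := Real.log_neg hr0 hr1
  have hcont : ∀ c : ℂ, ‖c‖ = 1 → IntervalIntegrable
      (fun x : ℝ => ‖G (c * (Real.exp x : ℝ))‖) volume (Real.log r) 0 := by
    intro c hcn
    apply ContinuousOn.intervalIntegrable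
    apply ContinuousOn.norm
    refine hc.comp (by fun_prop) ?_
    intro x hx
    rw [Set.uIcc_of_le hlog.le] at hx
    simp only [mem_ofPred_eq, norm_mul, hcn, one_mul, norm_real, Real.norm_eq_abs,
      abs_of_pos (Real.exp_pos x)]
    exact ⟨(Real.log_le_iff_le_exp hr0).1 hx.1, Real.exp_le_one_iff.2 hx.2⟩
  have i1 := hcont 1 (by simp)
  have i2 := hcont (-1) (by simp)
  simp only [one_mul, neg_mul] at i1 i2
  rw [intervalIntegral.integral_add i1 i2]
  have e0 : ∀ x : ℝ, exp (x + (0:ℝ) * I) = (Real.exp x : ℝ) := by intro x; simp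
  have e1 : ∀ x : ℝ, exp (x + ((0:ℝ) + Real.pi) * I) = -(Real.exp x : ℝ) := by
    intro x; simp [exp_add]
  have e2 : ∀ x : ℝ, exp (x + Real.pi * I) = -(Real.exp x : ℝ) := by
    intro x; simp [exp_add]
  have e3 : ∀ x : ℝ, exp (x + (Real.pi + Real.pi) * I) = (Real.exp x : ℝ) := by
    intro x; rw [exp_add, ← two_mul, exp_two_pi_mul_I]; simp
  simp only [e0, e1, zero_add] at h1
  simp only [e2, e3] at h2
  refine (norm_sub_le _ _).trans ?_
  linarith

/-- Change of variables `x = log (sin α)` on a cut, turning a bound with the weight `√(1 - s²)`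
into an integral over `[0, π/2]`. -/
lemma cut_bound (g K : ℝ → ℝ) (r : ℝ) (hr0 : 0 < r) (hr1 : r < 1)
    (hg : ContinuousOn g (Icc r 1)) (hK : ContinuousOn K (Icc 0 (Real.pi / 2)))
    (hK0 : ∀ α ∈ Icc 0 (Real.pi / 2), 0 ≤ K α)
    (hgK : ∀ α ∈ Icc 0 (Real.pi / 2), r ≤ Real.sin α →
      g (Real.sin α) * Real.cos α ≤ Real.sin α * K α) :
    ∫ x in (Real.log r)..0, g (Real.exp x) ≤ ∫ α in (0 : ℝ)..(Real.pi / 2), K α := by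
  have ha0 : 0 < Real.arcsin r := Real.arcsin_pos.2 hr0
  have ha1 : Real.arcsin r ≤ Real.pi / 2 := Real.arcsin_le_pi_div_two r
  have hsin : Real.sin (Real.arcsin r) = r := Real.sin_arcsin (by linarith) hr1.le
  have hs : ∀ α ∈ Icc (Real.arcsin r) (Real.pi / 2), r ≤ Real.sin α := by
    intro α hα
    rw [← hsin]
    exact Real.sin_le_sin_of_le_of_le_pi_div_two (by linarith [Real.pi_pos]) hα.2 hα.1
  have hpos : ∀ α ∈ Icc (Real.arcsin r) (Real.pi / 2), Real.sin α ≠ 0 := fun α hα =>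
    (hr0.trans_le (hs α hα)).ne'
  have cov := intervalIntegral.integral_comp_mul_deriv'' (a := Real.arcsin r) (b := Real.pi / 2)
    (f := fun α => Real.log (Real.sin α)) (f' := fun α => Real.cos α / Real.sin α)
    (g := fun x => g (Real.exp x))
    (by
      rw [uIcc_of_le ha1]
      exact ContinuousOn.log (by fun_prop) hpos)
    (by
      intro x hx
      rw [min_eq_left ha1, max_eq_right ha1] at hx
      exact ((Real.hasDerivAt_sin x).log (hpos x (Ioo_subset_Icc_self hx))).hasDerivWithinAt)
    (by
      rw [uIcc_of_le ha1]
      exact ContinuousOn.div (by fun_prop) (by fun_prop) hpos)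
    (by
      refine hg.comp (by fun_prop) ?_
      rintro _ ⟨α, hα, rfl⟩
      rw [uIcc_of_le ha1] at hα
      simp only
      rw [Real.exp_log (hr0.trans_le (hs α hα))]
      exact ⟨hs α hα, Real.sin_le_one α⟩)
  simp only [hsin, Real.sin_pi_div_two, Real.log_one] at cov
  rw [← cov]
  have hKi : IntervalIntegrable K volume (Real.arcsin r) (Real.pi / 2) := by
    apply ContinuousOn.intervalIntegrable
    rw [uIcc_of_le ha1]
    exact hK.mono (Icc_subset_Icc_left ha0.le)
  have hKi0 : IntervalIntegrable K volume 0 (Real.arcsin r) := by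
    apply ContinuousOn.intervalIntegrable
    rw [uIcc_of_le ha0.le]
    exact hK.mono (Icc_subset_Icc_right ha1)
  calc _ ≤ ∫ α in (Real.arcsin r)..(Real.pi / 2), K α := by
        apply intervalIntegral.integral_mono_on ha1 _ hKi
        · intro α hα
          have h1 := hgK α ⟨ha0.le.trans hα.1, hα.2⟩ (hs α hα)
          have h2 := hr0.trans_le (hs α hα)
          simp only [Function.comp]
          rw [Real.exp_log h2, ← mul_div_assoc, div_le_iff₀ h2]
          linarith
        · apply ContinuousOn.intervalIntegrable
          rw [uIcc_of_le ha1]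
          apply ContinuousOn.mul
          · refine hg.comp ?_ ?_
            · exact (ContinuousOn.log (by fun_prop) hpos).rexp
            · intro α hα
              simp only
              rw [Real.exp_log (hr0.trans_le (hs α hα))]
              exact ⟨hs α hα, Real.sin_le_one α⟩
          · exact ContinuousOn.div (by fun_prop) (by fun_prop) hpos
    _ ≤ _ := by
      rw [← intervalIntegral.integral_add_adjacent_intervals hKi0 hKi]
      have := intervalIntegral.integral_nonneg (μ := volume) ha0.le
        (fun α hα => hK0 α ⟨hα.1, hα.2.trans ha1⟩)
      linarith

/-- `(1 - t²)^{-1/2}` is a strict supersolution of the integral operator on the cuts. -/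
lemma supersolution (t : ℝ) (ht : t ^ 2 < 1) :
    ∫ α in (0 : ℝ)..(Real.pi / 2), 2 * Real.sin α ^ 2 / (1 - t ^ 2 * Real.sin α ^ 2) ≤
      Real.pi / √(1 - t ^ 2) - Real.pi / 2 := by
  set c := √(1 - t ^ 2) with hc
  have hc0 : 0 < c := Real.sqrt_pos.2 (by linarith)
  have hc2 : c ^ 2 = 1 - t ^ 2 := Real.sq_sqrt (by linarith)
  have hden : ∀ α : ℝ, 0 < 1 - t ^ 2 * Real.sin α ^ 2 := by
    intro α
    nlinarith [Real.sin_sq_le_one α, sq_nonneg (Real.sin α), sq_nonneg t]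
  have hden2 : ∀ α : ℝ, 0 < Real.cos α ^ 2 + c * Real.sin α ^ 2 := by
    intro α
    have h1 := Real.sin_sq_add_cos_sq α
    rcases eq_or_ne (Real.sin α) 0 with h0 | h0
    · rw [h0] at h1 ⊢; nlinarith
    · have : 0 < Real.sin α ^ 2 := by positivity
      nlinarith [sq_nonneg (Real.cos α), mul_pos hc0 this]
  have hder : ∀ α : ℝ, HasDerivAt (fun α => 2 / c * (α - Real.arctan ((1 - c) * Real.sin α * Real.cos α
        / (Real.cos α ^ 2 + c * Real.sin α ^ 2))) - (α + Real.sin α * Real.cos α))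
      (2 / (1 - t ^ 2 * Real.sin α ^ 2) - 2 * Real.cos α ^ 2) α := by
    intro α
    have hs := Real.hasDerivAt_sin α
    have hk := Real.hasDerivAt_cos α
    have d1 := ((hs.const_mul (1 - c)).mul hk).div ((hk.pow 2).add ((hs.pow 2).const_mul c)) (hden2 α).ne'
    have d2 := (((hasDerivAt_id α).sub d1.arctan).const_mul (2 / c)).sub
      ((hasDerivAt_id α).add (hs.mul hk))
    refine d2.congr_deriv ?_
    have hx := (hden2 α).ne'
    have hy := (hden α).ne'
    have hcc := hc0.ne'
    have hsq : Real.cos α ^ 2 = 1 - Real.sin α ^ 2 := by linarith [Real.sin_sq_add_cos_sq α]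
    have ht2 : t ^ 2 = 1 - c ^ 2 := by linarith
    simp only [Pi.add_apply, Pi.pow_apply, Pi.mul_apply, Pi.div_apply]
    set S := Real.sin α
    set K := Real.cos α
    have hz : 1 + ((1 - c) * S * K / (K ^ 2 + c * S ^ 2)) ^ 2 ≠ 0 := by positivity
    have e1 : 1 + ((1 - c) * S * K / (K ^ 2 + c * S ^ 2)) ^ 2
        = (1 - t ^ 2 * S ^ 2) / (K ^ 2 + c * S ^ 2) ^ 2 := by
      rw [eq_div_iff (pow_ne_zero _ hx), div_pow, add_mul, div_mul_cancel₀ _ (pow_ne_zero _ hx), ht2]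
      simp only [mul_pow, hsq]; ring
    rw [e1]
    field_simp
    simp only [Nat.cast_ofNat, Nat.add_one_sub_one, pow_one]
    rw [ht2] at hy ⊢
    have hK4 : K ^ 4 = (1 - S ^ 2) ^ 2 := by rw [← hsq]; ring
    ring_nf
    simp only [hK4, hsq]
    ring
  have hcont : ∀ f : ℝ → ℝ, Continuous f →
      Continuous (fun α : ℝ => f α / (1 - t ^ 2 * Real.sin α ^ 2)) := fun f hf =>
    hf.div (by fun_prop) (fun α => (hden α).ne')
  have hFTC := intervalIntegral.integral_eq_sub_of_hasDerivAt (a := 0) (b := Real.pi / 2)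
    (fun α _ => hder α)
    (((hcont _ continuous_const).sub (by fun_prop)).intervalIntegrable _ _)
  have hmono : ∫ α in (0 : ℝ)..(Real.pi / 2), 2 * Real.sin α ^ 2 / (1 - t ^ 2 * Real.sin α ^ 2)
      ≤ ∫ α in (0 : ℝ)..(Real.pi / 2), (2 / (1 - t ^ 2 * Real.sin α ^ 2) - 2 * Real.cos α ^ 2) := by
    apply intervalIntegral.integral_mono_on (by positivity)
    · exact (hcont _ (by fun_prop)).intervalIntegrable _ _
    · exact ((hcont _ continuous_const).sub (by fun_prop)).intervalIntegrable _ _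
    · intro α _
      rw [div_le_iff₀ (hden α), sub_mul, div_mul_cancel₀ _ (hden α).ne']
      have := Real.sin_sq_add_cos_sq α
      nlinarith [mul_nonneg (sq_nonneg t) (mul_nonneg (sq_nonneg (Real.sin α)) (sq_nonneg (Real.cos α)))]
  rw [hFTC] at hmono
  refine hmono.trans (le_of_eq ?_)
  simp

/-- The jump relation on the unit circle, integrated against a kernel `κ`. The left-hand side is
to be evaluated by Cauchy's formula; the right-hand side is the signed integral which is deformed
onto the cuts. -/
lemma jump_integral (y Y Φ κ : ℂ → ℂ)
    (hy : DiffContOnCl ℂ y (Metric.ball 0 1)) (hY : DiffContOnCl ℂ Y (Metric.ball 0 1))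
    (hκ : ContinuousOn κ (Metric.sphere 0 1))
    (hu : ∀ θ ∈ Icc 0 Real.pi, y (exp (-(θ * I))) =
      Y (exp (θ * I)) + I * exp (θ * I) * Φ (exp (θ * I)) * y (exp (θ * I)))
    (hl : ∀ θ ∈ Icc Real.pi (2 * Real.pi), y (exp (-(θ * I))) =
      Y (exp (θ * I)) - I * exp (θ * I) * Φ (exp (θ * I)) * y (exp (θ * I))) :
    (∫ θ in (0 : ℝ)..(2 * Real.pi), y (exp (θ * I)) * κ (exp (-(θ * I)))) -
      (∫ θ in (0 : ℝ)..(2 * Real.pi), Y (exp (θ * I)) * κ (exp (θ * I))) =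
    (∫ θ in (0 : ℝ)..Real.pi,
      (fun t => I * t * Φ t * y t * κ t) (exp (θ * I))) -
    ∫ θ in Real.pi..(2 * Real.pi), (fun t => I * t * Φ t * y t * κ t) (exp (θ * I)) := by
  have hpi := Real.pi_pos
  have hyc := hy.continuousOn
  have hYc := hY.continuousOn
  rw [closure_ball (0 : ℂ) one_ne_zero] at hyc hYc
  have hsph := Metric.sphere_subset_closedBall (x := (0 : ℂ)) (ε := 1)
  have c1 : ∀ g : ℂ → ℂ, ContinuousOn g (Metric.sphere 0 1) →
      Continuous (fun θ : ℝ => g (exp (θ * I))) := by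
    intro g hg
    refine hg.comp_continuous (by fun_prop) ?_
    intro θ; simp [norm_exp_ofReal_mul_I]
  have c2 : ∀ g : ℂ → ℂ, ContinuousOn g (Metric.sphere 0 1) →
      Continuous (fun θ : ℝ => g (exp (-(θ * I)))) := by
    intro g hg
    refine hg.comp_continuous (by fun_prop) ?_
    intro θ; simp [norm_exp]
  have cy2 := c2 y (hyc.mono hsph)
  have cY1 := c1 Y (hYc.mono hsph)
  have ck1 := c1 κ hκ
  have e1 : ∫ θ in (0 : ℝ)..(2 * Real.pi), y (exp (θ * I)) * κ (exp (-(θ * I))) =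
      ∫ θ in (0 : ℝ)..(2 * Real.pi), y (exp (-(θ * I))) * κ (exp (θ * I)) := by
    have := intervalIntegral.integral_comp_sub_left (a := 0) (b := 2 * Real.pi)
      (fun θ : ℝ => y (exp (θ * I)) * κ (exp (-(θ * I)))) (2 * Real.pi)
    rw [sub_zero, sub_self] at this
    rw [← this]
    congr 1
    ext θ
    have h1 : exp (((2 * Real.pi - θ : ℝ) : ℂ) * I) = exp (-(θ * I)) := by
      push_cast
      rw [sub_mul, sub_eq_add_neg, exp_add, exp_two_pi_mul_I, one_mul]
    have h2 : exp (-(((2 * Real.pi - θ : ℝ) : ℂ) * I)) = exp (θ * I) := by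
      rw [exp_neg, h1, exp_neg, inv_inv]
    rw [h1, h2]
  have cA : Continuous (fun θ : ℝ => y (exp (-(θ * I))) * κ (exp (θ * I))) := cy2.mul ck1
  have cB : Continuous (fun θ : ℝ => Y (exp (θ * I)) * κ (exp (θ * I))) := cY1.mul ck1
  have cD : Continuous (fun θ : ℝ => y (exp (-(θ * I))) * κ (exp (θ * I)) -
    Y (exp (θ * I)) * κ (exp (θ * I))) := cA.sub cB
  rw [e1, ← intervalIntegral.integral_sub (cA.intervalIntegrable _ _) (cB.intervalIntegrable _ _),
    ← intervalIntegral.integral_add_adjacent_intervals (b := Real.pi)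
      (cD.intervalIntegrable _ _) (cD.intervalIntegrable _ _),
    sub_eq_add_neg (∫ θ in (0 : ℝ)..Real.pi, _), ← intervalIntegral.integral_neg]
  congr 1
  · apply intervalIntegral.integral_congr
    intro θ hθ
    rw [uIcc_of_le hpi.le] at hθ
    simp only
    rw [hu θ hθ]; ring
  · apply intervalIntegral.integral_congr
    intro θ hθ
    rw [uIcc_of_le (by linarith)] at hθ
    simp only
    rw [hl θ hθ]; ring

lemma cauchy_avg (f : ℂ → ℂ) (hf : DiffContOnCl ℂ f (Metric.ball 0 1)) (w : ℂ) (hw : ‖w‖ < 1) :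
    ∫ θ in (0 : ℝ)..(2 * Real.pi), f (exp (θ * I)) * (1 / (1 - exp (-(θ * I)) * w))
      = 2 * Real.pi * f w := by
  have h1 := DiffContOnCl.circleAverage_smul_div (c := 0) (R := 1) (w := w) (f := f)
    (by simpa using hf) (by simpa using hw)
  rw [Real.circleAverage_def, inv_smul_eq_iff₀ (by positivity)] at h1
  have : (2 * Real.pi : ℝ) • f w = 2 * Real.pi * f w := by simp
  rw [← this, ← h1]
  congr 1; ext θ
  simp only [circleMap, ofReal_one, one_mul, zero_add, sub_zero, smul_eq_mul]
  have hne : exp (θ * I) - w ≠ 0 := by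
    intro h0
    have := norm_exp_ofReal_mul_I θ
    rw [sub_eq_zero.1 h0] at this
    linarith
  have hne2 : 1 - exp (-(θ * I)) * w ≠ 0 := by
    intro h0
    apply hne
    have := congrArg (fun z => exp (θ * I) * z) h0
    simp only [mul_sub, mul_one, ← mul_assoc, ← exp_add, mul_zero] at this
    simpa using this
  have hE : exp (θ * I) * exp (-(θ * I)) = 1 := by rw [← exp_add]; simp
  field_simp
  linear_combination (w * f (exp (θ * I))) * hE

lemma cauchy_avg' (f : ℂ → ℂ) (hf : DiffContOnCl ℂ f (Metric.ball 0 1)) (w : ℂ) (hw : ‖w‖ < 1) :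
    ∫ θ in (0 : ℝ)..(2 * Real.pi), f (exp (θ * I)) * (1 / (1 - exp (θ * I) * w))
      = 2 * Real.pi * f 0 := by
  have hg : DiffContOnCl ℂ (fun t => f t * (1 / (1 - t * w))) (Metric.ball 0 1) := by
    have hne : ∀ t ∈ closure (Metric.ball (0 : ℂ) 1), 1 - t * w ≠ 0 := by
      intro t ht h0
      rw [closure_ball (0 : ℂ) one_ne_zero] at ht
      have h1 : ‖t * w‖ = 1 := by rw [← sub_eq_zero.1 h0]; simp
      rw [norm_mul] at h1
      have h2 : ‖t‖ ≤ 1 := by simpa using ht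
      nlinarith [norm_nonneg t, norm_nonneg w]
    refine ⟨hf.1.mul (DifferentiableOn.div (by fun_prop) (by fun_prop)
        fun t ht => hne t (subset_closure ht)),
      hf.2.mul (ContinuousOn.div (by fun_prop) (by fun_prop) hne)⟩
  have := cauchy_avg _ hg 0 (by simp)
  simpa using this

/-! ### The a priori estimate -/

/-- Bound for the signed integral of `I t Φ y κ`: the cuts contribute through the maximum `θ₀` of
`|y(s)| √(1 - s²)` on `[-1, 1]`, the inner circle through the small bound `δ` for `Φ`. -/
lemma core_bound (y Φ κ : ℂ → ℂ) (K : ℝ → ℝ) (r δ M θ₀ kb : ℝ) (hr0 : 0 < r) (hr1 : r < 1)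
    (hδ0 : 0 ≤ δ) (hM0 : 0 ≤ M) (hθ0 : 0 ≤ θ₀)
    (hy : DiffContOnCl ℂ y (Metric.ball 0 1)) (hΦ : DifferentiableOn ℂ Φ {0}ᶜ)
    (hΦs : ∀ s : ℝ, r ≤ |s| → |s| ≤ 1 → ‖Φ s‖ ≤ s ^ 2)
    (hΦr : ∀ t, ‖t‖ = r → ‖Φ t‖ ≤ δ)
    (hM : ∀ t, ‖t‖ = r → ‖y t‖ ≤ M)
    (hθ : ∀ s : ℝ, |s| ≤ 1 → ‖y s‖ * √(1 - s ^ 2) ≤ θ₀)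
    (hκd : DifferentiableOn ℂ κ {t | r ≤ ‖t‖ ∧ ‖t‖ ≤ 1})
    (hκr : ∀ t, ‖t‖ = r → ‖κ t‖ ≤ kb)
    (hK0 : ∀ s, 0 ≤ s → s ≤ 1 → 0 ≤ K s) (hKc : ContinuousOn K (Icc 0 1))
    (hK : ∀ s : ℝ, r ≤ s → s ≤ 1 → ‖κ s‖ + ‖κ (-s)‖ ≤ K s) :
    ‖(∫ θ in (0 : ℝ)..Real.pi, (fun t => I * t * Φ t * y t * κ t) (exp (θ * I))) -
      ∫ θ in Real.pi..(2 * Real.pi), (fun t => I * t * Φ t * y t * κ t) (exp (θ * I))‖ ≤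
    2 * (θ₀ * ∫ α in (0 : ℝ)..(Real.pi / 2), Real.sin α ^ 2 * K (Real.sin α))
      + 2 * (δ * M * kb * Real.pi) := by
  have hyc := hy.continuousOn
  rw [closure_ball (0 : ℂ) one_ne_zero] at hyc
  have hGc : ContinuousOn (fun t => I * t * Φ t * y t * κ t) {t | r ≤ ‖t‖ ∧ ‖t‖ ≤ 1} := by
    refine ((ContinuousOn.mul (by fun_prop) (hΦ.continuousOn.mono ?_)).mul (hyc.mono ?_)).mul
      hκd.continuousOn
    · rintro t ⟨h1, -⟩ h0
      rw [h0, norm_zero] at h1; linarith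
    · rintro t ⟨-, h2⟩; simpa using h2
  have hGd : DifferentiableOn ℂ (fun t => I * t * Φ t * y t * κ t) {t | r < ‖t‖ ∧ ‖t‖ < 1} := by
    refine ((DifferentiableOn.mul (by fun_prop) (hΦ.mono ?_)).mul (hy.1.mono ?_)).mul
      (hκd.mono ?_)
    · rintro t ⟨h1, -⟩ h0
      rw [h0, norm_zero] at h1; linarith
    · rintro t ⟨-, h2⟩; simpa using h2
    · rintro t ⟨h1, h2⟩; exact ⟨h1.le, h2.le⟩
  have hmain := signed_circle_bound _ r (δ * M * kb) hr0 hr1 hGc hGd (by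
    intro t ht
    have a1 := hΦr t ht
    have a2 := hM t ht
    have a3 := hκr t ht
    simp only [norm_mul, norm_I, one_mul, ht]
    calc r * ‖Φ t‖ * ‖y t‖ * ‖κ t‖ ≤ 1 * δ * M * kb := by gcongr
      _ = _ := by ring)
  refine hmain.trans ?_
  have hcut := cut_bound
    (fun s => ‖(fun t => I * t * Φ t * y t * κ t) (s : ℂ)‖ +
      ‖(fun t => I * t * Φ t * y t * κ t) (-(s : ℂ))‖)
    (fun α => θ₀ * (Real.sin α ^ 2 * K (Real.sin α))) r hr0 hr1
    (by
      apply ContinuousOn.add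
      · refine ContinuousOn.norm (hGc.comp (by fun_prop) ?_)
        rintro s ⟨h1, h2⟩
        simp only [mem_ofPred_eq, norm_real, Real.norm_eq_abs, abs_of_pos (hr0.trans_le h1)]
        exact ⟨h1, h2⟩
      · refine ContinuousOn.norm (hGc.comp (by fun_prop) ?_)
        rintro s ⟨h1, h2⟩
        simp only [mem_ofPred_eq, norm_neg, norm_real, Real.norm_eq_abs, abs_of_pos (hr0.trans_le h1)]
        exact ⟨h1, h2⟩)
    (by
      refine continuousOn_const.mul (ContinuousOn.mul (by fun_prop) (hKc.comp (by fun_prop) ?_))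
      intro α hα
      exact ⟨Real.sin_nonneg_of_mem_Icc ⟨hα.1, by linarith [hα.2, Real.pi_pos]⟩, Real.sin_le_one α⟩)
    (by
      intro α hα
      have := hK0 (Real.sin α) (Real.sin_nonneg_of_mem_Icc ⟨hα.1, by linarith [hα.2, Real.pi_pos]⟩)
        (Real.sin_le_one α)
      positivity)
    (by
      intro α hα hs
      have hcos : Real.cos α = √(1 - Real.sin α ^ 2) := by
        rw [← Real.cos_sq', Real.sqrt_sq]
        exact Real.cos_nonneg_of_mem_Icc ⟨by linarith [hα.1, Real.pi_pos], hα.2⟩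
      have hc0 : 0 ≤ Real.cos α := by rw [hcos]; positivity
      set s := Real.sin α
      have hs0 : 0 < s := hr0.trans_le hs
      have hs1 : s ≤ 1 := Real.sin_le_one α
      have k1 := hθ s (by rwa [abs_of_pos hs0])
      have k2 := hθ (-s) (by rwa [abs_neg, abs_of_pos hs0])
      have p1 := hΦs s (by rwa [abs_of_pos hs0]) (by rwa [abs_of_pos hs0])
      have p2 := hΦs (-s) (by rwa [abs_neg, abs_of_pos hs0]) (by rwa [abs_neg, abs_of_pos hs0])
      rw [neg_sq, ← hcos] at k2
      rw [← hcos] at k1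
      rw [neg_sq] at p2
      push_cast at k2 p2
      simp only [norm_mul, norm_I, one_mul, norm_neg, norm_real, Real.norm_eq_abs, abs_of_pos hs0]
      have hk := hK s hs hs1
      calc (s * ‖Φ s‖ * ‖y s‖ * ‖κ s‖ + s * ‖Φ (-s)‖ * ‖y (-s)‖ * ‖κ (-s)‖) * Real.cos α
          = s * (‖Φ s‖ * (‖y s‖ * Real.cos α) * ‖κ s‖ +
            ‖Φ (-s)‖ * (‖y (-s)‖ * Real.cos α) * ‖κ (-s)‖) := by ring
        _ ≤ s * (s ^ 2 * θ₀ * ‖κ s‖ + s ^ 2 * θ₀ * ‖κ (-s)‖) := by gcongr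
        _ = s * (θ₀ * (s ^ 2 * (‖κ s‖ + ‖κ (-s)‖))) := by ring
        _ ≤ s * (θ₀ * (s ^ 2 * K s)) := by gcongr)
  rw [intervalIntegral.integral_const_mul] at hcut
  have := Real.pi_pos
  linarith

lemma sin_sq_const_integral_le (c : ℝ) (hc : 0 ≤ c) :
    ∫ α in (0 : ℝ)..(Real.pi / 2), Real.sin α ^ 2 * c ≤ Real.pi / 2 * c := by
  have h1 : ∫ α in (0 : ℝ)..(Real.pi / 2), Real.sin α ^ 2 * c ≤
      ∫ α in (0 : ℝ)..(Real.pi / 2), c := by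
    apply intervalIntegral.integral_mono_on (by positivity)
      (Continuous.intervalIntegrable (by fun_prop) _ _)
      (Continuous.intervalIntegrable (by fun_prop) _ _)
    intro α _
    nlinarith [Real.sin_sq_le_one α]
  simpa using h1

/-- The a priori estimate: with an exponentially small arc contribution, the jump relation forces
`Y` to be comparable with its value at the origin. -/
theorem apriori (y Y Φ : ℂ → ℂ) (r δ : ℝ) (hr0 : 0 < r) (hr1 : r < 1)
    (hδ0 : 0 ≤ δ) (hδ : δ ≤ (1 - r) ^ 2 / 8)
    (hy : DiffContOnCl ℂ y (Metric.ball 0 1)) (hY : DiffContOnCl ℂ Y (Metric.ball 0 1))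
    (hΦ : DifferentiableOn ℂ Φ {0}ᶜ)
    (hΦs : ∀ s : ℝ, r ≤ |s| → |s| ≤ 1 → ‖Φ s‖ ≤ s ^ 2)
    (hΦr : ∀ t, ‖t‖ = r → ‖Φ t‖ ≤ δ)
    (hu : ∀ θ ∈ Icc 0 Real.pi, y (exp (-(θ * I))) =
      Y (exp (θ * I)) + I * exp (θ * I) * Φ (exp (θ * I)) * y (exp (θ * I)))
    (hl : ∀ θ ∈ Icc Real.pi (2 * Real.pi), y (exp (-(θ * I))) =
      Y (exp (θ * I)) - I * exp (θ * I) * Φ (exp (θ * I)) * y (exp (θ * I)))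
    (t₀ : ℂ) (ht₀ : ‖t₀‖ ≤ r / 2) : ‖Y t₀‖ ≤ 16 / (1 - r) * ‖Y 0‖ := by
  have hpi := Real.pi_pos
  have hyc := hy.continuousOn
  rw [closure_ball (0 : ℂ) one_ne_zero] at hyc
  have h1r : 0 < 1 - r := by linarith
  -- the maximum of the weighted modulus on the cut
  obtain ⟨s₀, hs₀, hmax⟩ := (isCompact_Icc (a := (-1 : ℝ)) (b := 1)).exists_isMaxOn
    ⟨0, by norm_num⟩ (f := fun s : ℝ => ‖y s‖ * √(1 - s ^ 2)) (by
      refine ContinuousOn.mul (ContinuousOn.norm (hyc.comp (by fun_prop) ?_)) (by fun_prop)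
      intro s hs
      simpa [abs_le] using hs)
  set θ₀ := ‖y s₀‖ * √(1 - s₀ ^ 2) with hθdef
  have hθ0 : 0 ≤ θ₀ := by positivity
  have hθ : ∀ s : ℝ, |s| ≤ 1 → ‖y s‖ * √(1 - s ^ 2) ≤ θ₀ := fun s hs => hmax (abs_le.1 hs)
  obtain ⟨t₁, ht₁, hmax1⟩ := (isCompact_sphere (0 : ℂ) r).exists_isMaxOn
    ((NormedSpace.sphere_nonempty).2 hr0.le) (f := fun t => ‖y t‖)
    (ContinuousOn.norm (hyc.mono (Metric.sphere_subset_closedBall.trans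
      (Metric.closedBall_subset_closedBall hr1.le))))
  set M := ‖y t₁‖ with hMdef
  have hM0 : 0 ≤ M := norm_nonneg _
  have hM : ∀ t, ‖t‖ = r → ‖y t‖ ≤ M := fun t ht => hmax1 (by simpa using ht)
  set E := ‖Y 0‖ with hE
  have hE0 : 0 ≤ E := norm_nonneg _
  -- the jump relation tested against the kernel `1 / (1 - t w)` isolates `y w - Y 0`
  have eq1 : ∀ w : ℂ, ‖w‖ < 1 → ∀ (K : ℝ → ℝ), (∀ s, 0 ≤ s → s ≤ 1 → 0 ≤ K s) →
      ContinuousOn K (Icc 0 1) →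
      (∀ s : ℝ, r ≤ s → s ≤ 1 → ‖1 / (1 - s * w)‖ + ‖1 / (1 - -s * w)‖ ≤ K s) →
      2 * Real.pi * ‖y w‖ ≤ 2 * Real.pi * E +
        2 * (θ₀ * ∫ α in (0 : ℝ)..(Real.pi / 2), Real.sin α ^ 2 * K (Real.sin α))
        + 2 * (δ * M * (1 / (1 - r)) * Real.pi) := by
    intro w hw K hK0 hKc hK
    have hne : ∀ t : ℂ, ‖t‖ ≤ 1 → 1 - t * w ≠ 0 := by
      intro t ht h0
      have h1 : ‖t * w‖ = 1 := by rw [← sub_eq_zero.1 h0]; simp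
      rw [norm_mul] at h1
      nlinarith [norm_nonneg t, norm_nonneg w]
    have hκd : DifferentiableOn ℂ (fun t => 1 / (1 - t * w)) {t | ‖t‖ ≤ 1} :=
      DifferentiableOn.div (by fun_prop) (by fun_prop) (fun t ht => hne t ht)
    have hb := core_bound y Φ (fun t => 1 / (1 - t * w)) K r δ M θ₀ (1 / (1 - r)) hr0 hr1 hδ0 hM0 hθ0
      hy hΦ hΦs hΦr hM hθ (hκd.mono fun t ht => ht.2)
      (by
        intro t ht
        rw [norm_div, norm_one]
        apply one_div_le_one_div_of_le h1r
        have h2 := norm_sub_norm_le (1 : ℂ) (t * w)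
        rw [norm_mul, ht, norm_one] at h2
        nlinarith) hK0 hKc hK
    have hj := jump_integral y Y Φ (fun t => 1 / (1 - t * w)) hy hY
      (hκd.continuousOn.mono fun t ht => by
        have : ‖t‖ = 1 := by simpa using ht
        exact this.le) hu hl
    rw [← hj, cauchy_avg y hy w hw, cauchy_avg' Y hY w hw] at hb
    have h3 := norm_sub_norm_le (2 * Real.pi * y w) (2 * Real.pi * Y 0)
    simp only [norm_mul, norm_real, Real.norm_eq_abs, abs_of_pos hpi, Complex.norm_ofNat] at h3
    linarith
  -- bound inside the disc of radius `r`
  have bd : ∀ w : ℂ, ‖w‖ ≤ r → ‖y w‖ ≤ E + θ₀ / (1 - r) + δ * M / (1 - r) := by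
    intro w hw
    have := eq1 w (hw.trans_lt hr1) (fun _ => 2 / (1 - r)) (fun _ _ _ => by positivity)
      continuousOn_const (by
        intro s hs hs1
        have hs0 := hr0.trans_le hs
        have hq : ∀ t : ℂ, ‖t‖ = s → ‖1 / (1 - t * w)‖ ≤ 1 / (1 - r) := by
          intro t ht
          rw [norm_div, norm_one]
          apply one_div_le_one_div_of_le h1r
          have h2 := norm_sub_norm_le (1 : ℂ) (t * w)
          rw [norm_mul, ht, norm_one] at h2
          nlinarith [norm_nonneg w]
        have a1 := hq s (by simp [abs_of_pos hs0])
        have a2 := hq (-s) (by simp [abs_of_pos hs0])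
        calc _ ≤ 1 / (1 - r) + 1 / (1 - r) := add_le_add a1 a2
          _ = _ := by ring)
    have h2 := sin_sq_const_integral_le (2 / (1 - r)) (by positivity)
    have h3 := mul_le_mul_of_nonneg_left h2 hθ0
    have h4 : Real.pi * ‖y w‖ ≤ Real.pi * (E + θ₀ / (1 - r) + δ * M / (1 - r)) := by
      calc Real.pi * ‖y w‖ ≤ Real.pi * E + θ₀ * (Real.pi / 2 * (2 / (1 - r))) +
            δ * M * (1 / (1 - r)) * Real.pi := by linarith
        _ = _ := by ring
    exact le_of_mul_le_mul_left h4 hpi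
  -- evaluated at the maximum point `s₀`, the strict supersolution leaves a gain of `θ₀ / 2`
  have hθle : θ₀ ≤ 2 * E + 2 * (δ * M / (1 - r)) := by
    rcases hθ0.eq_or_lt with h0 | hpos
    · rw [← h0]; positivity
    have hs1 : s₀ ^ 2 < 1 := by
      by_contra hcon
      have : √(1 - s₀ ^ 2) = 0 := Real.sqrt_eq_zero_of_nonpos (by linarith)
      rw [hθdef, this, mul_zero] at hpos
      exact lt_irrefl _ hpos
    have habs : |s₀| < 1 := by rwa [← sq_lt_one_iff_abs_lt_one]
    have hden : ∀ s : ℝ, 0 ≤ s → s ≤ 1 → 0 < 1 - s₀ ^ 2 * s ^ 2 := by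
      intro s hs0 hs1'
      have hss : s ^ 2 ≤ 1 := pow_le_one₀ hs0 hs1'
      have hs02 : s₀ ^ 2 < 1 := (sq_lt_one_iff_abs_lt_one s₀).mpr habs
      nlinarith [sq_nonneg s₀, mul_le_mul_of_nonneg_left hss (sq_nonneg s₀)]
    have := eq1 s₀ (by simpa using habs) (fun s => 2 / (1 - s₀ ^ 2 * s ^ 2))
      (fun s hs0 hs1' => div_nonneg zero_le_two (hden s hs0 hs1').le)
      (ContinuousOn.div (by fun_prop) (by fun_prop) fun s hs => (hden s hs.1 hs.2).ne')
      (by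
        intro s hs hs1'
        have hs0 := hr0.trans_le hs
        obtain ⟨h1, h2⟩ := abs_lt.1 habs
        have q1 : 0 < 1 - s * s₀ := by nlinarith
        have q2 : 0 < 1 - -s * s₀ := by nlinarith
        have e1 : ‖1 / (1 - (s : ℂ) * s₀)‖ = 1 / (1 - s * s₀) := by
          rw [← abs_of_pos (one_div_pos.2 q1), ← Real.norm_eq_abs, ← norm_real]; push_cast; rfl
        have e2 : ‖1 / (1 - -(s : ℂ) * s₀)‖ = 1 / (1 - -s * s₀) := by
          rw [← abs_of_pos (one_div_pos.2 q2), ← Real.norm_eq_abs, ← norm_real]; push_cast; rfl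
        rw [e1, e2]
        apply le_of_eq
        have q3 := (hden s hs0.le hs1').ne'
        rw [div_add_div _ _ q1.ne' q2.ne', div_eq_div_iff (mul_pos q1 q2).ne' q3]
        ring)
    have hsup := supersolution s₀ hs1
    have hc : (∫ α in (0 : ℝ)..(Real.pi / 2), Real.sin α ^ 2 * (2 / (1 - s₀ ^ 2 * Real.sin α ^ 2)))
        = ∫ α in (0 : ℝ)..(Real.pi / 2), 2 * Real.sin α ^ 2 / (1 - s₀ ^ 2 * Real.sin α ^ 2) := by
      congr 1; ext α; ring
    rw [hc] at this
    have h3 := mul_le_mul_of_nonneg_left hsup hθ0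
    have hsq : 0 < √(1 - s₀ ^ 2) := Real.sqrt_pos.2 (by linarith)
    have h5 : ‖y s₀‖ = θ₀ / √(1 - s₀ ^ 2) := by rw [hθdef]; field_simp
    have h4 : Real.pi * θ₀ ≤ Real.pi * (2 * E + 2 * (δ * M / (1 - r))) := by
      rw [h5] at this
      have e3 : θ₀ * (Real.pi / √(1 - s₀ ^ 2) - Real.pi / 2) =
        Real.pi * (θ₀ / √(1 - s₀ ^ 2)) - Real.pi * θ₀ / 2 := by ring
      have e4 : δ * M * (1 / (1 - r)) * Real.pi = Real.pi * (δ * M / (1 - r)) := by ring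
      rw [e3] at h3
      rw [e4] at this
      linarith
    exact le_of_mul_le_mul_left h4 hpi
  have hMle := bd t₁ (by simpa using ht₁.le)
  rw [← hMdef] at hMle
  have hδM : δ * M / (1 - r) ≤ (1 - r) * M / 8 := by
    rw [div_le_iff₀ h1r]; nlinarith
  have hME : (1 - r) * M ≤ 6 * E := by
    have h1 : (1 - r) * M ≤ (1 - r) * E + θ₀ + (1 - r) * (δ * M / (1 - r)) := by
      calc (1 - r) * M ≤ (1 - r) * (E + θ₀ / (1 - r) + δ * M / (1 - r)) := by gcongr
        _ = _ := by field_simp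
    have h2 : (1 - r) * (δ * M / (1 - r)) ≤ (1 - r) * ((1 - r) * M / 8) := by gcongr
    have h3 : (1 - r) * M ≥ 0 := by positivity
    nlinarith
  have hθE : θ₀ ≤ 4 * E := by linarith
  have hy0 : ‖y 0‖ ≤ E + θ₀ / (1 - r) + δ * M / (1 - r) := bd 0 (by simpa using hr0.le)
  -- the reflected kernel `1 / (1 - t₀ / t)` isolates `y 0 - Y t₀` instead
  have hκd : DifferentiableOn ℂ (fun t => 1 / (1 - t⁻¹ * t₀)) {t | r ≤ ‖t‖ ∧ ‖t‖ ≤ 1} := by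
    have h0 : ∀ t ∈ {t : ℂ | r ≤ ‖t‖ ∧ ‖t‖ ≤ 1}, t ≠ 0 := by
      rintro t ⟨h1, -⟩ h0
      rw [h0, norm_zero] at h1; linarith
    refine DifferentiableOn.div (by fun_prop) ?_ ?_
    · exact DifferentiableOn.const_sub ((differentiableOn_id.inv h0).mul_const _) _
    · intro t ht hz
      have h1 : ‖t⁻¹ * t₀‖ = 1 := by rw [← sub_eq_zero.1 hz]; simp
      rw [norm_mul, norm_inv, inv_mul_eq_one₀ (norm_ne_zero_iff.2 (h0 t ht))] at h1
      have := ht.1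
      linarith
  have hkb : ∀ t : ℂ, r ≤ ‖t‖ → ‖1 / (1 - t⁻¹ * t₀)‖ ≤ 2 := by
    intro t ht
    have h1 : ‖t⁻¹ * t₀‖ ≤ 1 / 2 := by
      rw [norm_mul, norm_inv, inv_mul_le_iff₀ (hr0.trans_le ht)]
      linarith
    have h2 := norm_sub_norm_le (1 : ℂ) (t⁻¹ * t₀)
    rw [norm_one] at h2
    rw [norm_div, norm_one, div_le_iff₀ (by linarith)]
    linarith
  have hb := core_bound y Φ (fun t => 1 / (1 - t⁻¹ * t₀)) (fun _ => 4) r δ M θ₀ 2 hr0 hr1 hδ0 hM0 hθ0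
      hy hΦ hΦs hΦr hM hθ hκd (fun t ht => hkb t ht.ge) (fun _ _ _ => by norm_num) continuousOn_const
      (by
        intro s hs _
        have hs0 := hr0.trans_le hs
        have a1 := hkb s (by simpa [abs_of_pos hs0] using hs)
        have a2 := hkb (-s) (by simpa [abs_of_pos hs0] using hs)
        linarith)
  have hj := jump_integral y Y Φ (fun t => 1 / (1 - t⁻¹ * t₀)) hy hY
      (hκd.continuousOn.mono fun t ht => by
        have : ‖t‖ = 1 := by simpa using ht
        exact ⟨by linarith, this.le⟩) hu hl
  rw [← hj] at hb
  simp only [← exp_neg, neg_neg] at hb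
  have ht1 : ‖t₀‖ < 1 := by linarith
  rw [cauchy_avg' y hy t₀ ht1, cauchy_avg Y hY t₀ ht1, norm_sub_rev] at hb
  have h3 := norm_sub_norm_le (2 * Real.pi * Y t₀) (2 * Real.pi * y 0)
  simp only [norm_mul, norm_real, Real.norm_eq_abs, abs_of_pos hpi, Complex.norm_ofNat] at h3
  have h2 := mul_le_mul_of_nonneg_left (sin_sq_const_integral_le 4 (by norm_num)) hθ0
  have h4 : Real.pi * ‖Y t₀‖ ≤ Real.pi * (‖y 0‖ + 2 * θ₀ + 2 * (δ * M)) := by linarith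
  have h5 := le_of_mul_le_mul_left h4 hpi
  rw [div_mul_eq_mul_div, le_div_iff₀ h1r]
  have h6 : δ * M ≤ δ * M / (1 - r) := by
    rw [le_div_iff₀ h1r]
    nlinarith [mul_nonneg hδ0 hM0]
  have h7 : (1 - r) * ‖y 0‖ ≤ (1 - r) * E + θ₀ + (1 - r) * (δ * M / (1 - r)) := by
    calc (1 - r) * ‖y 0‖ ≤ (1 - r) * (E + θ₀ / (1 - r) + δ * M / (1 - r)) := by gcongr
      _ = _ := by field_simp
  nlinarith

/-! ### Boundary behaviour of power series -/

/-- A power series with `O(j⁻²)` coefficients that vanishes at `1` is `O(|1 - t| ^ (3/4))` on the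
closed disc. Any exponent in `(1/2, 1)` would do: it has to beat the square root in
`(1 - t ^ 2) ^ (1 / 2)`. -/
theorem tsum_pow_bound_one (b : ℕ → ℂ) (C : ℝ) (hb : ∀ j, ‖b j‖ ≤ C / ((j : ℝ) + 1) ^ 2)
    (h1 : ∑' j, b j = 0) :
    ∃ C', 0 ≤ C' ∧ ∀ t : ℂ, ‖t‖ ≤ 1 → ‖∑' j, b j * t ^ j‖ ≤ C' * ‖1 - t‖ ^ (3 / 4 : ℝ) := by
  have hC : 0 ≤ C := by have := (norm_nonneg _).trans (hb 0); simpa using this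
  have hs2 : Summable fun j : ℕ => C / ((j : ℝ) + 1) ^ 2 := by
    have := (Real.summable_one_div_nat_add_rpow 1 2).mpr (by norm_num)
    refine (this.mul_left C).congr fun j => ?_
    rw [abs_of_pos (by positivity), Real.rpow_two]; ring
  have hs : Summable fun j : ℕ => 2 * C * (1 / |(j : ℝ) + 1| ^ (5 / 4 : ℝ)) :=
    ((Real.summable_one_div_nat_add_rpow 1 (5 / 4)).mpr (by norm_num)).mul_left _
  refine ⟨∑' j : ℕ, 2 * C * (1 / |(j : ℝ) + 1| ^ (5 / 4 : ℝ)),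
    tsum_nonneg fun j => by positivity, fun t ht => ?_⟩
  have hbs : Summable b := Summable.of_norm_bounded hs2 hb
  have hbt : Summable fun j => b j * t ^ j := by
    refine Summable.of_norm_bounded hs2 fun j => ?_
    rw [norm_mul, norm_pow]
    exact (mul_le_of_le_one_right (norm_nonneg _) (pow_le_one₀ (norm_nonneg _) ht)).trans (hb j)
  have e : ∑' j, b j * t ^ j = ∑' j, b j * (t ^ j - 1) := by
    have : ∑' j, (b j * t ^ j - b j) = _ := hbt.tsum_sub hbs
    rw [h1, sub_zero] at this
    rw [← this]; congr 1; ext j; ring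
  rw [e, ← tsum_mul_right]
  refine tsum_of_norm_bounded (hs.mul_right _).hasSum fun j => ?_
  -- interpolation between the bounds `2` and `j * ‖1 - t‖`
  have hp : ‖t ^ j - 1‖ ≤ 2 * (((j : ℝ) + 1) * ‖1 - t‖) ^ (3 / 4 : ℝ) := by
    set x := ((j : ℝ) + 1) * ‖1 - t‖ with hx
    have hx0 : 0 ≤ x := by positivity
    rcases le_total x 1 with h | h
    · have k1 : ‖t ^ j - 1‖ ≤ x := by
        rw [← mul_geom_sum, norm_mul, mul_comm, hx, norm_sub_rev 1 t]
        refine mul_le_mul_of_nonneg_right ?_ (norm_nonneg _)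
        refine (norm_sum_le _ _).trans ?_
        refine (Finset.sum_le_sum (g := fun _ => (1 : ℝ)) fun i _ => ?_).trans ?_
        · rw [norm_pow]; exact pow_le_one₀ (norm_nonneg _) ht
        · simp
      have k2 : x ≤ x ^ (3 / 4 : ℝ) := by
        conv_lhs => rw [← Real.rpow_one x]
        rcases hx0.eq_or_lt with h0 | h0
        · rw [← h0]; rw [Real.zero_rpow, Real.zero_rpow] <;> norm_num
        · exact Real.rpow_le_rpow_of_exponent_ge h0 h (by norm_num)
      have : 0 ≤ x ^ (3 / 4 : ℝ) := by positivity
      linarith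
    · have k1 : ‖t ^ j - 1‖ ≤ 2 := by
        refine (norm_sub_le _ _).trans ?_
        rw [norm_pow, norm_one]
        have := pow_le_one₀ (n := j) (norm_nonneg _) ht
        linarith
      have := Real.one_le_rpow h (z := 3 / 4) (by norm_num)
      linarith
  rw [norm_mul, abs_of_pos (by positivity : (0 : ℝ) < j + 1)]
  have hj : (0 : ℝ) < j + 1 := by positivity
  calc ‖b j‖ * ‖t ^ j - 1‖
      ≤ C / ((j : ℝ) + 1) ^ 2 * (2 * (((j : ℝ) + 1) * ‖1 - t‖) ^ (3 / 4 : ℝ)) := by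
        gcongr; exact hb j
    _ = _ := by
        rw [Real.mul_rpow hj.le (norm_nonneg _)]
        have : ((j : ℝ) + 1) ^ 2 = ((j : ℝ) + 1) ^ (5 / 4 : ℝ) * ((j : ℝ) + 1) ^ (3 / 4 : ℝ) := by
          rw [← Real.rpow_add hj, ← Real.rpow_two]; norm_num
        rw [this]
        have : 0 < ((j : ℝ) + 1) ^ (3 / 4 : ℝ) := by positivity
        field_simp

theorem tsum_pow_bound (b : ℕ → ℂ) (C : ℝ) (hb : ∀ j, ‖b j‖ ≤ C / ((j : ℝ) + 1) ^ 2)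
    (h1 : ∑' j, b j = 0) (h2 : ∑' j, b j * (-1) ^ j = 0) :
    ∃ C', 0 ≤ C' ∧ ∀ t : ℂ, ‖t‖ ≤ 1 →
      ‖∑' j, b j * t ^ j‖ ≤ C' * ‖1 - t ^ 2‖ ^ (3 / 4 : ℝ) := by
  obtain ⟨C1, hC1, k1⟩ := tsum_pow_bound_one b C hb h1
  obtain ⟨C2, hC2, k2⟩ := tsum_pow_bound_one (fun j => b j * (-1) ^ j) C
    (fun j => by simpa using hb j) h2
  refine ⟨C1 + C2, by positivity, fun t ht => ?_⟩
  have e : ‖1 - t ^ 2‖ = ‖1 - t‖ * ‖1 + t‖ := by rw [← norm_mul]; ring_nf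
  have hsum : 2 ≤ ‖1 - t‖ + ‖1 + t‖ := by
    have := norm_add_le (1 - t) (1 + t)
    have e2 : (1 - t) + (1 + t) = 2 := by ring
    rw [e2] at this; simpa using this
  have hx : 0 ≤ ‖1 - t ^ 2‖ ^ (3 / 4 : ℝ) := by positivity
  rcases le_total 1 ‖1 + t‖ with h | h
  · refine (k1 t ht).trans ?_
    have : ‖1 - t‖ ^ (3 / 4 : ℝ) ≤ ‖1 - t ^ 2‖ ^ (3 / 4 : ℝ) := by
      rw [e]; gcongr; exact le_mul_of_one_le_right (norm_nonneg _) h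
    nlinarith
  · have k := k2 (-t) (by simpa using ht)
    have e3 : ∀ j : ℕ, b j * (-1) ^ j * (-t) ^ j = b j * t ^ j := fun j => by
      rw [mul_assoc, ← mul_pow]; ring_nf
    simp only [e3, sub_neg_eq_add] at k
    refine k.trans ?_
    have : ‖1 + t‖ ^ (3 / 4 : ℝ) ≤ ‖1 - t ^ 2‖ ^ (3 / 4 : ℝ) := by
      rw [e]; gcongr; exact le_mul_of_one_le_left (norm_nonneg _) (by linarith)
    nlinarith

theorem tsum_pow_diffContOnCl (b : ℕ → ℂ) (C : ℝ) (hb : ∀ j, ‖b j‖ ≤ C / ((j : ℝ) + 1) ^ 2) :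
    DiffContOnCl ℂ (fun t => ∑' j, b j * t ^ j) (Metric.ball 0 1) := by
  have hs2 : Summable fun j : ℕ => C / ((j : ℝ) + 1) ^ 2 := by
    have := (Real.summable_one_div_nat_add_rpow 1 2).mpr (by norm_num)
    refine (this.mul_left C).congr fun j => ?_
    rw [abs_of_pos (by positivity), Real.rpow_two]; ring
  have hbt : ∀ (j : ℕ) (t : ℂ), ‖t‖ ≤ 1 → ‖b j * t ^ j‖ ≤ C / ((j : ℝ) + 1) ^ 2 := by
    intro j t ht
    rw [norm_mul, norm_pow]
    exact (mul_le_of_le_one_right (norm_nonneg _) (pow_le_one₀ (norm_nonneg _) ht)).trans (hb j)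
  constructor
  · exact Complex.differentiableOn_tsum_of_summable_norm hs2 (fun i => by fun_prop)
      Metric.isOpen_ball fun i w hw => hbt i w (by simpa using (mem_ball_zero_iff.mp hw).le)
  · rw [closure_ball _ one_ne_zero]
    exact continuousOn_tsum (fun i => by fun_prop) hs2
      fun i w hw => hbt i w (by simpa using hw)

theorem one_sub_sq_mem_slitPlane (t : ℂ) (ht : ‖t‖ ≤ 1) (hne : t ^ 2 ≠ 1) :
    1 - t ^ 2 ∈ slitPlane := by
  left
  have h1 : ‖t ^ 2‖ ≤ 1 := by rw [norm_pow]; exact pow_le_one₀ (norm_nonneg _) ht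
  have h2 := (re_le_norm (t ^ 2)).trans h1
  rcases h2.lt_or_eq with h | h
  · simpa using h
  · exfalso; apply hne
    have h4 := sq_norm_sub_sq_re (t ^ 2)
    have h5 : (t ^ 2).im = 0 := by
      have : ‖t ^ 2‖ ^ 2 ≤ 1 := pow_le_one₀ (norm_nonneg _) h1
      rw [h] at h4; nlinarith [sq_nonneg (t ^ 2).im]
    exact Complex.ext (by simpa using h) (by simpa using h5)

/-- Dividing by `(1 - t ^ 2) ^ (1 / 2)` keeps continuity up to `t = ±1`, where the quotient takes
the value `0` by the convention `x / 0 = 0`. -/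
theorem y_diffContOnCl (B E : ℂ → ℂ) (C : ℝ)
    (hB : DiffContOnCl ℂ B (Metric.ball 0 1)) (hE : Differentiable ℂ E)
    (hb : ∀ t : ℂ, ‖t‖ ≤ 1 → ‖B t‖ ≤ C * ‖1 - t ^ 2‖ ^ (3 / 4 : ℝ)) :
    DiffContOnCl ℂ (fun t => B t * E t / (1 - t ^ 2) ^ (1 / 2 : ℂ)) (Metric.ball 0 1) := by
  constructor
  · intro t ht
    have ht' : ‖t‖ < 1 := by simpa using ht
    have hne : t ^ 2 ≠ 1 := by
      intro h
      have : ‖t‖ ^ 2 = 1 := by rw [← norm_pow, h, norm_one]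
      nlinarith [norm_nonneg t]
    have hsp := one_sub_sq_mem_slitPlane t ht'.le hne
    refine DifferentiableWithinAt.div ((hB.differentiableOn t ht).mul (hE t).differentiableWithinAt)
      ?_ ?_
    · apply DifferentiableWithinAt.cpow_const
      · fun_prop
      · exact hsp
    · rw [Ne, cpow_eq_zero_iff]; exact fun h => slitPlane_ne_zero hsp h.1
  · rw [closure_ball _ one_ne_zero]
    have hBc := hB.continuousOn
    rw [closure_ball _ one_ne_zero] at hBc
    intro t ht
    have ht' : ‖t‖ ≤ 1 := by simpa using ht
    by_cases hne : t ^ 2 = 1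
    · have hz : (1 - t ^ 2 : ℂ) ^ (1 / 2 : ℂ) = 0 := by rw [hne]; simp
      unfold ContinuousWithinAt
      simp only [hz, div_zero]
      have hlim : Filter.Tendsto (fun s : ℂ => C * ‖E s‖ * ‖1 - s ^ 2‖ ^ (1 / 4 : ℝ))
          (nhdsWithin t (Metric.closedBall 0 1)) (nhds 0) := by
        have : Continuous fun s : ℂ => C * ‖E s‖ * ‖1 - s ^ 2‖ ^ (1 / 4 : ℝ) := by
          have := hE.continuous
          refine (by fun_prop : Continuous fun s => C * ‖E s‖).mul ?_
          exact (by fun_prop : Continuous fun s : ℂ => ‖1 - s ^ 2‖).rpow_const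
            fun _ => Or.inr (by norm_num)
        have h := this.tendsto t
        rw [hne, sub_self, norm_zero, Real.zero_rpow (by norm_num), mul_zero] at h
        exact h.mono_left nhdsWithin_le_nhds
      refine squeeze_zero_norm' ?_ hlim
      filter_upwards [self_mem_nhdsWithin] with s hs
      have hs' : ‖s‖ ≤ 1 := by simpa using hs
      have hr : ‖(1 - s ^ 2 : ℂ) ^ (1 / 2 : ℂ)‖ = ‖1 - s ^ 2‖ ^ (1 / 2 : ℝ) := by
        have := Complex.norm_cpow_real (1 - s ^ 2) (1 / 2)
        push_cast at this; exact this
      rw [norm_div, norm_mul, hr]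
      rcases (norm_nonneg (1 - s ^ 2)).eq_or_lt with h0 | h0
      · rw [← h0, Real.zero_rpow (by norm_num), Real.zero_rpow (by norm_num)]; simp
      · rw [div_le_iff₀ (by positivity), mul_assoc, ← Real.rpow_add h0]
        calc _ ≤ C * ‖1 - s ^ 2‖ ^ (3 / 4 : ℝ) * ‖E s‖ := by gcongr; exact hb s hs'
          _ = _ := by norm_num; ring
    · have hsp := one_sub_sq_mem_slitPlane t ht' hne
      refine ContinuousWithinAt.div ((hBc t ht).mul hE.continuous.continuousWithinAt) ?_ ?_
      · refine ContinuousWithinAt.cpow (by fun_prop) continuousWithinAt_const hsp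
      · rw [Ne, cpow_eq_zero_iff]; exact fun h => slitPlane_ne_zero hsp h.1

theorem rho_diffContOnCl :
    DiffContOnCl ℂ (fun t : ℂ => (1 - t ^ 2) ^ (1 / 2 : ℂ)) (Metric.ball 0 1) := by
  constructor
  · intro t ht
    have ht' : ‖t‖ < 1 := by simpa using ht
    have hne : t ^ 2 ≠ 1 := by
      intro h
      have : ‖t‖ ^ 2 = 1 := by rw [← norm_pow, h, norm_one]
      nlinarith [norm_nonneg t]
    have hsp := one_sub_sq_mem_slitPlane t ht'.le hne
    apply DifferentiableWithinAt.cpow_const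
    · fun_prop
    · exact hsp
  · rw [closure_ball _ one_ne_zero]
    intro t ht
    have ht' : ‖t‖ ≤ 1 := by simpa using ht
    by_cases hne : t ^ 2 = 1
    · have hz : (1 - t ^ 2 : ℂ) ^ (1 / 2 : ℂ) = 0 := by rw [hne]; simp
      unfold ContinuousWithinAt
      simp only [hz]
      have hc : Continuous fun s : ℂ => ‖1 - s ^ 2‖ ^ (1 / 2 : ℝ) :=
        (by fun_prop : Continuous fun s : ℂ => ‖1 - s ^ 2‖).rpow_const
          fun _ => Or.inr (by norm_num)
      have h := hc.tendsto t
      rw [hne, sub_self, norm_zero, Real.zero_rpow (by norm_num)] at h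
      refine squeeze_zero_norm (fun s => le_of_eq ?_) (h.mono_left nhdsWithin_le_nhds)
      have := Complex.norm_cpow_real (1 - s ^ 2) (1 / 2)
      push_cast at this; exact this
    · have hsp := one_sub_sq_mem_slitPlane t ht' hne
      exact ContinuousWithinAt.cpow (by fun_prop) continuousWithinAt_const hsp

/-! ### Cosine series -/

/-- Two integrations by parts. -/
theorem cos_coeff_decay (g : ℝ → ℂ) (hg : ContDiff ℝ 2 g) (h0 : g 0 = 0) (h1 : g Real.pi = 0) :
    ∃ C : ℝ, ∀ j : ℕ, ‖∫ θ in (0 : ℝ)..Real.pi, g θ * Real.cos (j * θ)‖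
      ≤ C / ((j : ℝ) + 1) ^ 2 := by
  have hg1 : ContDiff ℝ 1 (deriv g) := hg.deriv' (n := 1)
  have hd : ∀ x, HasDerivAt g (deriv g x) x := fun x =>
    (hg.differentiable (by norm_num) x).hasDerivAt
  have hd1 : ∀ x, HasDerivAt (deriv g) (deriv (deriv g) x) x := fun x =>
    (hg1.differentiable (by norm_num) x).hasDerivAt
  have hc0 : Continuous g := hg.continuous
  have hc1 : Continuous (deriv g) := hg1.continuous
  have hc2 : Continuous (deriv (deriv g)) := hg1.continuous_deriv (by norm_num)
  set K := ∫ θ in (0 : ℝ)..Real.pi, ‖deriv (deriv g) θ‖ with hK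
  set K0 := ∫ θ in (0 : ℝ)..Real.pi, ‖g θ‖ with hK0
  have hpi := Real.pi_pos.le
  have hKn : 0 ≤ K := intervalIntegral.integral_nonneg hpi fun _ _ => norm_nonneg _
  have hK0n : 0 ≤ K0 := intervalIntegral.integral_nonneg hpi fun _ _ => norm_nonneg _
  refine ⟨K0 + 4 * (‖deriv g 0‖ + ‖deriv g Real.pi‖ + K), fun j => ?_⟩
  have hcosb : ∀ (F : ℝ → ℂ), Continuous F →
      ‖∫ θ in (0 : ℝ)..Real.pi, F θ * Real.cos (j * θ)‖ ≤ ∫ θ in (0 : ℝ)..Real.pi, ‖F θ‖ := by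
    intro F hF
    refine intervalIntegral.norm_integral_le_of_norm_le hpi ?_ (hF.norm.intervalIntegrable _ _)
    refine Filter.Eventually.of_forall fun θ _ => ?_
    rw [norm_mul, norm_real]
    exact mul_le_of_le_one_right (norm_nonneg _) (Real.abs_cos_le_one _)
  rcases Nat.eq_zero_or_pos j with rfl | hj
  · refine (hcosb g hc0).trans ?_
    simp only [CharP.cast_eq_zero, zero_add, one_pow, div_one]
    have := norm_nonneg (deriv g 0)
    have := norm_nonneg (deriv g Real.pi)
    linarith
  have hjR : (0 : ℝ) < j := by exact_mod_cast hj
  have hjC : (j : ℂ) ≠ 0 := by exact_mod_cast hj.ne'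
  have hs : ∀ x : ℝ, HasDerivAt (fun θ : ℝ => ((Real.sin (j * θ) : ℝ) : ℂ) / j)
      (Real.cos (j * x) : ℝ) x := by
    intro x
    have h : HasDerivAt (fun θ : ℝ => Real.sin (j * θ)) (Real.cos (j * x) * (j * 1)) x :=
      ((hasDerivAt_id x).const_mul (j : ℝ)).sin
    have := h.ofReal_comp.div_const (j : ℂ)
    refine HasDerivAt.congr_deriv this ?_
    rw [div_eq_iff hjC]; push_cast; ring
  have hcs : ∀ x : ℝ, HasDerivAt (fun θ : ℝ => -((Real.cos (j * θ) : ℝ) : ℂ) / j)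
      (Real.sin (j * x) : ℝ) x := by
    intro x
    have h : HasDerivAt (fun θ : ℝ => Real.cos (j * θ)) (-Real.sin (j * x) * (j * 1)) x :=
      ((hasDerivAt_id x).const_mul (j : ℝ)).cos
    have := h.ofReal_comp.neg.div_const (j : ℂ)
    refine HasDerivAt.congr_deriv this ?_
    rw [div_eq_iff hjC]; push_cast; ring
  have i1 := intervalIntegral.integral_mul_deriv_eq_deriv_mul (a := 0) (b := Real.pi)
    (fun x _ => hd x) (fun x _ => hs x) (hc1.intervalIntegrable _ _)
    ((by fun_prop : Continuous fun x : ℝ => ((Real.cos (j * x) : ℝ) : ℂ)).intervalIntegrable _ _)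
  have i2 := intervalIntegral.integral_mul_deriv_eq_deriv_mul (a := 0) (b := Real.pi)
    (fun x _ => hd1 x) (fun x _ => hcs x) (hc2.intervalIntegrable _ _)
    ((by fun_prop : Continuous fun x : ℝ => ((Real.sin (j * x) : ℝ) : ℂ)).intervalIntegrable _ _)
  simp only [h0, h1, zero_mul, sub_self, zero_sub] at i1
  have e1 : ∫ x in (0 : ℝ)..Real.pi, deriv g x * (((Real.sin (j * x) : ℝ) : ℂ) / j)
      = (∫ x in (0 : ℝ)..Real.pi, deriv g x * (Real.sin (j * x) : ℝ)) / j := by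
    rw [← intervalIntegral.integral_div]; congr 1; ext x; ring
  have e2 : ∫ x in (0 : ℝ)..Real.pi, deriv (deriv g) x * (-((Real.cos (j * x) : ℝ) : ℂ) / j)
      = -(∫ x in (0 : ℝ)..Real.pi, deriv (deriv g) x * (Real.cos (j * x) : ℝ)) / j := by
    rw [← intervalIntegral.integral_neg, ← intervalIntegral.integral_div]; congr 1; ext x; ring
  rw [e1, i2, e2] at i1
  have e3 : ∫ θ in (0 : ℝ)..Real.pi, g θ * (Real.cos (j * θ) : ℝ)
      = (deriv g Real.pi * (Real.cos (j * Real.pi) : ℝ) - deriv g 0 * (Real.cos (j * 0) : ℝ)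
        - ∫ x in (0 : ℝ)..Real.pi, deriv (deriv g) x * (Real.cos (j * x) : ℝ)) / (j : ℂ) ^ 2 := by
    rw [i1]; field_simp; ring
  rw [e3, norm_div, norm_pow, Complex.norm_natCast]
  have n1 : ‖deriv g Real.pi * (Real.cos (j * Real.pi) : ℝ) - deriv g 0 * (Real.cos (j * 0) : ℝ)
        - ∫ x in (0 : ℝ)..Real.pi, deriv (deriv g) x * (Real.cos (j * x) : ℝ)‖
      ≤ ‖deriv g 0‖ + ‖deriv g Real.pi‖ + K := by
    refine (norm_sub_le _ _).trans (add_le_add ((norm_sub_le _ _).trans ?_) (hcosb _ hc2))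
    rw [norm_mul, norm_mul, norm_real, norm_real, add_comm]
    exact add_le_add (mul_le_of_le_one_right (norm_nonneg _) (Real.abs_cos_le_one _))
      (mul_le_of_le_one_right (norm_nonneg _) (Real.abs_cos_le_one _))
  set Q := ‖deriv g 0‖ + ‖deriv g Real.pi‖ + K with hQ
  have hQ0 : 0 ≤ Q := by positivity
  have hj1 : (1 : ℝ) ≤ j := by exact_mod_cast hj
  calc _ ≤ Q / (j : ℝ) ^ 2 := by gcongr
    _ ≤ (K0 + 4 * Q) / ((j : ℝ) + 1) ^ 2 := by
        rw [div_le_div_iff₀ (by positivity) (by positivity)]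
        have : ((j : ℝ) + 1) ^ 2 ≤ 4 * (j : ℝ) ^ 2 := by nlinarith
        nlinarith [mul_le_mul_of_nonneg_left this hQ0, mul_nonneg hK0n (sq_nonneg (j : ℝ))]

/-- The cosine coefficients of `θ ↦ F (cos θ) sin θ` on `[0, π]`, normalized as the complex Fourier
coefficients of `θ ↦ F (cos θ) |sin θ|`. -/
noncomputable def cosCoeff (F : ℝ → ℂ) (j : ℕ) : ℂ :=
  (1 / Real.pi) * ∫ θ in (0 : ℝ)..Real.pi, F (Real.cos θ) * Real.sin θ * Real.cos (j * θ)

theorem cosCoeff_decay (F : ℝ → ℂ) (hF : ContDiff ℝ 2 F) :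
    ∃ C : ℝ, ∀ j : ℕ, ‖cosCoeff F j‖ ≤ C / ((j : ℝ) + 1) ^ 2 := by
  obtain ⟨C, hC⟩ := cos_coeff_decay (fun θ => F (Real.cos θ) * Real.sin θ)
    ((hF.comp Real.contDiff_cos).mul (ofRealCLM.contDiff.comp Real.contDiff_sin))
    (by simp) (by simp)
  refine ⟨1 / Real.pi * C, fun j => ?_⟩
  rw [cosCoeff, norm_mul, mul_div_assoc]
  have : ‖(1 / Real.pi : ℂ)‖ = 1 / Real.pi := by
    rw [norm_div, norm_one, norm_real, Real.norm_of_nonneg Real.pi_pos.le]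
  rw [this]
  exact mul_le_mul_of_nonneg_left (hC j) (by have := Real.pi_pos; positivity)

theorem cos_series (F : ℝ → ℂ) (hF : ContDiff ℝ 2 F) (h0 : cosCoeff F 0 = 0) (θ : ℝ) :
    HasSum (fun j : ℕ => cosCoeff F j * (exp (θ * I) ^ j + exp (-(θ * I)) ^ j))
      (F (Real.cos θ) * |Real.sin θ|) := by
  have : Fact (0 < 2 * Real.pi) := ⟨by have := Real.pi_pos; positivity⟩
  have hper : Function.Periodic (fun θ : ℝ => F (Real.cos θ) * ((|Real.sin θ| : ℝ) : ℂ))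
      (2 * Real.pi) := fun x => by simp
  have hcont : Continuous (fun θ : ℝ => F (Real.cos θ) * ((|Real.sin θ| : ℝ) : ℂ)) := by
    have := hF.continuous
    fun_prop
  let f : C(AddCircle (2 * Real.pi), ℂ) :=
    ⟨hper.lift, continuous_coinduced_dom.mpr hcont⟩
  have hf : ∀ x : ℝ, f (x : AddCircle (2 * Real.pi)) = F (Real.cos x) * ((|Real.sin x| : ℝ) : ℂ) :=
    fun x => rfl
  have hfour : ∀ (m : ℤ) (x : ℝ), fourier m (x : AddCircle (2 * Real.pi)) = exp (m * (x * I)) := by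
    intro m x
    rw [fourier_coe_apply]
    congr 1
    have : (Real.pi : ℂ) ≠ 0 := by exact_mod_cast Real.pi_ne_zero
    push_cast; field_simp
  have hcosZ : ∀ (m : ℤ) (x : ℝ),
      ((Real.cos (m.natAbs * x) : ℝ) : ℂ) = Complex.cos (m * (x : ℂ)) := by
    intro m x
    obtain ⟨k, rfl | rfl⟩ := m.eq_nat_or_neg
    · simp
    · simp
  have hcoef : ∀ m : ℤ, fourierCoeff f m = cosCoeff F m.natAbs := by
    intro m
    rw [fourierCoeff_eq_intervalIntegral f m (-Real.pi)]
    simp only [hf, hfour]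
    have e : -Real.pi + 2 * Real.pi = Real.pi := by ring
    rw [e]
    have hci : ∀ s : ℝ → ℂ, Continuous s → ∀ a b : ℝ, IntervalIntegrable s volume a b :=
      fun s hs a b => hs.intervalIntegrable a b
    have hFc := hF.continuous
    set S : ℝ → ℂ := fun x => exp (((-m : ℤ) : ℂ) * (x * I)) •
      (F (Real.cos x) * ((|Real.sin x| : ℝ) : ℂ)) with hS
    have hSc : Continuous S := by simp only [hS]; fun_prop
    have split : ∫ x in (-Real.pi)..Real.pi, S x = ∫ x in (0 : ℝ)..Real.pi, (S x + S (-x)) := by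
      rw [intervalIntegral.integral_add (hci _ hSc _ _)
        (hci (fun x => S (-x)) (hSc.comp continuous_neg) _ _), intervalIntegral.integral_comp_neg,
        neg_zero, add_comm, intervalIntegral.integral_add_adjacent_intervals
        (hci _ hSc _ _) (hci _ hSc _ _)]
    rw [split, cosCoeff]
    have e2 : ∫ x in (0 : ℝ)..Real.pi, (S x + S (-x)) = ∫ x in (0 : ℝ)..Real.pi,
        2 * (F (Real.cos x) * Real.sin x * Real.cos (m.natAbs * x)) := by
      refine intervalIntegral.integral_congr fun x hx => ?_
      rw [uIcc_of_le Real.pi_pos.le] at hx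
      have hsn : |Real.sin x| = Real.sin x :=
        abs_of_nonneg (Real.sin_nonneg_of_nonneg_of_le_pi hx.1 hx.2)
      have hcos := hcosZ m x
      simp only [hS, Real.cos_neg, Real.sin_neg, abs_neg, hsn, smul_eq_mul, hcos, Complex.cos]
      have a1 : (((-m : ℤ) : ℂ)) * (x * I) = -(m * x) * I := by push_cast; ring
      have a2 : (((-m : ℤ) : ℂ)) * (((-x : ℝ) : ℂ) * I) = (m * x) * I := by push_cast; ring
      rw [a1, a2]; ring
    rw [e2, intervalIntegral.integral_const_mul, real_smul]
    have : (Real.pi : ℂ) ≠ 0 := by exact_mod_cast Real.pi_ne_zero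
    push_cast; field_simp
  obtain ⟨C, hC⟩ := cosCoeff_decay F hF
  have hs2 : Summable fun j : ℕ => C / ((j : ℝ) + 1) ^ 2 := by
    have := (Real.summable_one_div_nat_add_rpow 1 2).mpr (by norm_num)
    refine (this.mul_left C).congr fun j => ?_
    rw [abs_of_pos (by positivity), Real.rpow_two]; ring
  have hsum : Summable (fun j : ℕ => cosCoeff F j) := Summable.of_norm_bounded hs2 hC
  have hsumZ : Summable (fourierCoeff f) := by
    have : Summable fun m : ℤ => fourierCoeff f m := by
      simp only [hcoef]
      refine Summable.of_nat_of_neg ?_ ?_ <;> simpa using hsum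
    exact this
  have key := (has_pointwise_sum_fourier_series_of_summable hsumZ (θ : AddCircle (2 * Real.pi))).nat_add_neg
  rw [hf] at key
  simp only [hcoef, hfour, smul_eq_mul, Int.natAbs_zero, h0, zero_mul, add_zero,
    Int.natAbs_natCast, Int.natAbs_neg] at key
  convert key using 2 with j
  rw [← Complex.exp_nat_mul, ← Complex.exp_nat_mul]
  push_cast; ring_nf

/-! ### Orthogonality and the jump relation -/

/-- After `x = cos θ`, the coefficient of index `j` is the pairing of `p` with the Chebyshev
polynomial `T_j`, so orthogonality kills it for `j < n`. -/
theorem cosCoeff_eq_zero (ω : ℝ) (n : ℕ) (p : Polynomial ℂ) (hp : IsOrthoPoly ω n p)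
    (j : ℕ) (hj : j < n) :
    cosCoeff (fun x : ℝ => p.eval (x : ℂ) * exp (I * ω * x)) j = 0 := by
  have hpc : Continuous fun x : ℝ => p.eval (x : ℂ) := p.continuous.comp continuous_ofReal
  have hq : ∀ q : Polynomial ℂ, q.natDegree < n →
      ∫ x in (-1 : ℝ)..1, p.eval (x : ℂ) * q.eval (x : ℂ) * exp (I * ω * x) = 0 := by
    intro q hqd
    have : ∀ x : ℝ, p.eval (x : ℂ) * q.eval (x : ℂ) * exp (I * ω * x) =
        ∑ i ∈ Finset.range (q.natDegree + 1),
          q.coeff i * (p.eval (x : ℂ) * (x : ℂ) ^ i * exp (I * ω * x)) := by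
      intro x
      rw [Polynomial.eval_eq_sum_range (p := q), Finset.mul_sum, Finset.sum_mul]
      exact Finset.sum_congr rfl fun i _ => by ring
    simp only [this]
    rw [intervalIntegral.integral_finsetSum]
    · refine Finset.sum_eq_zero fun i hi => ?_
      rw [intervalIntegral.integral_const_mul, hp.2.2 i (by have := Finset.mem_range.mp hi; omega),
        mul_zero]
    · intro i _
      exact Continuous.intervalIntegrable (by fun_prop) _ _
  have hT := hq (Polynomial.Chebyshev.T ℂ j)
    (by rw [Polynomial.Chebyshev.natDegree_T]; simpa using hj)
  have hTc : Continuous fun x : ℝ => (Polynomial.Chebyshev.T ℂ j).eval (x : ℂ) :=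
    (Polynomial.Chebyshev.T ℂ j).continuous.comp continuous_ofReal
  have hsub := intervalIntegral.integral_deriv_smul_comp (a := 0) (b := Real.pi)
    (f := Real.cos) (f' := fun x => -Real.sin x)
    (g := fun x : ℝ => p.eval (x : ℂ) * (Polynomial.Chebyshev.T ℂ j).eval (x : ℂ)
      * exp (I * ω * x))
    (fun x _ => Real.hasDerivAt_cos x) (by fun_prop) (by fun_prop)
  rw [Real.cos_zero, Real.cos_pi, intervalIntegral.integral_symm (-1 : ℝ) 1, hT, neg_zero] at hsub
  rw [cosCoeff]
  refine mul_eq_zero_of_right _ ?_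
  rw [← neg_eq_zero, ← intervalIntegral.integral_neg, ← hsub]
  refine intervalIntegral.integral_congr fun x _ => ?_
  have := Polynomial.Chebyshev.T_complex_cos (x : ℂ) j
  simp only [Function.comp, real_smul, ofReal_cos, this]
  push_cast; ring

theorem contDiff_weighted (ω : ℝ) (p : Polynomial ℂ) :
    ContDiff ℝ 2 (fun x : ℝ => p.eval (x : ℂ) * exp (I * ω * x)) := by
  have h1 : ContDiff ℝ 2 (fun x : ℝ => (x : ℂ)) := ofRealCLM.contDiff
  have h2 : ContDiff ℝ 2 (fun z : ℂ => p.eval z) := by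
    have : ContDiff ℂ 2 (fun z : ℂ => p.eval z) := by
      simpa using p.contDiff_aeval (𝕜 := ℂ) 2
    exact this.restrict_scalars ℝ
  exact (h2.comp h1).mul ((contDiff_const.mul h1).cexp)

theorem cpow_half_polar (s φ : ℝ) (hs : 0 < s) (h1 : -Real.pi < φ) (h2 : φ ≤ Real.pi) :
    ((s : ℂ) * exp (φ * I)) ^ (1 / 2 : ℂ) = (Real.sqrt s : ℂ) * exp (φ / 2 * I) := by
  rw [cpow_def_of_ne_zero (mul_ne_zero (by exact_mod_cast hs.ne') (exp_ne_zero _)),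
    log_ofReal_mul hs (exp_ne_zero _), log_exp (by simpa using h1) (by simpa using h2), add_mul,
    exp_add]
  congr 1
  · rw [Real.sqrt_eq_rpow, Real.rpow_def_of_pos hs]; push_cast; rfl
  · congr 1; ring

/-- Boundary values of `(1 - t ^ 2) ^ (1 / 2)` on the upper half circle. -/
theorem rho_upper (θ : ℝ) (h0 : 0 < Real.sin θ) (h1 : 0 ≤ θ) (h2 : θ ≤ Real.pi) :
    (1 - exp (θ * I) ^ 2) ^ (1 / 2 : ℂ) * (1 - exp (-(θ * I)) ^ 2) ^ (1 / 2 : ℂ)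
        = 2 * Real.sin θ ∧
    (1 - exp (θ * I) ^ 2) ^ (1 / 2 : ℂ)
        = -I * exp (θ * I) * (1 - exp (-(θ * I)) ^ 2) ^ (1 / 2 : ℂ) := by
  have hpi := Real.pi_pos
  have hI2 : exp ((Real.pi / 2 : ℝ) * I) = I := by
    push_cast; exact exp_pi_div_two_mul_I
  have hmul : exp (θ * I) * exp (-(θ * I)) = 1 := by rw [← exp_add]; simp
  have hsin : ((Real.sin θ : ℝ) : ℂ) = (exp (-(θ * I)) - exp (θ * I)) * I / 2 := by
    rw [ofReal_sin, Complex.sin]; ring_nf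
  have e1 : 1 - exp (θ * I) ^ 2 = ((2 * Real.sin θ : ℝ) : ℂ) * exp (((θ - Real.pi / 2 : ℝ) : ℂ) * I) := by
    have : exp (((θ - Real.pi / 2 : ℝ) : ℂ) * I) = exp (θ * I) * (-I) := by
      rw [ofReal_sub, sub_mul, exp_sub, hI2, div_eq_mul_inv, inv_I]
    rw [this, ofReal_mul, hsin]
    push_cast
    linear_combination (-1 : ℂ) * hmul +
      (exp (θ * I) * exp (-(θ * I)) - exp (θ * I) ^ 2) * I_sq
  have e2 : 1 - exp (-(θ * I)) ^ 2
      = ((2 * Real.sin θ : ℝ) : ℂ) * exp (((Real.pi / 2 - θ : ℝ) : ℂ) * I) := by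
    have : exp (((Real.pi / 2 - θ : ℝ) : ℂ) * I) = exp (-(θ * I)) * I := by
      rw [ofReal_sub, sub_mul, exp_sub, hI2, exp_neg, div_eq_mul_inv, mul_comm]
    rw [this, ofReal_mul, hsin]
    push_cast
    linear_combination (-1 : ℂ) * hmul +
      (exp (θ * I) * exp (-(θ * I)) - exp (-(θ * I)) ^ 2) * I_sq
  have hs2 : 0 < 2 * Real.sin θ := by positivity
  rw [e1, e2, cpow_half_polar _ _ hs2 (by linarith) (by linarith),
    cpow_half_polar _ _ hs2 (by linarith) (by linarith)]
  have hss : (Real.sqrt (2 * Real.sin θ) : ℂ) * Real.sqrt (2 * Real.sin θ) = 2 * Real.sin θ := by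
    rw [← ofReal_mul, Real.mul_self_sqrt hs2.le]; push_cast; rfl
  constructor
  · rw [mul_mul_mul_comm, hss, ← exp_add]
    have : ((θ - Real.pi / 2 : ℝ) : ℂ) / 2 * I + ((Real.pi / 2 - θ : ℝ) : ℂ) / 2 * I = 0 := by
      push_cast; ring
    rw [this, exp_zero, mul_one]
  · have : exp (((θ - Real.pi / 2 : ℝ) : ℂ) / 2 * I)
        = -I * exp (θ * I) * exp (((Real.pi / 2 - θ : ℝ) : ℂ) / 2 * I) := by
      have h3 : -I = exp (((-(Real.pi / 2) : ℝ) : ℂ) * I) := by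
        rw [ofReal_neg, neg_mul, exp_neg, hI2, inv_I]
      rw [h3, ← exp_add, ← exp_add]; congr 1; push_cast; ring
    rw [this]; ring

theorem eval_joukowski (p : Polynomial ℂ) (hp : p.Monic) (t ti : ℂ) (h : t * ti = 1) :
    t ^ p.natDegree * p.eval ((t + ti) / 2) =
      (1 / 2) ^ p.natDegree * (p.roots.map fun ζ => 1 - 2 * ζ * t + t ^ 2).prod := by
  have hsp : p.Splits := IsAlgClosed.splits p
  have hc : Multiset.card p.roots = p.natDegree := IsAlgClosed.card_roots_eq_natDegree
  rw [hsp.eval_eq_prod_roots_of_monic hp, ← hc]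
  have e : (fun ζ : ℂ => 1 - 2 * ζ * t + t ^ 2) = fun ζ => (2 * t) * ((t + ti) / 2 - ζ) := by
    ext ζ; linear_combination (-1 : ℂ) * h
  rw [e, Multiset.prod_map_mul, Multiset.map_const', Multiset.prod_replicate, mul_pow]
  have : ((1 / 2 : ℂ)) ^ Multiset.card p.roots * 2 ^ Multiset.card p.roots = 1 := by
    rw [← mul_pow]; norm_num
  linear_combination (-(t ^ Multiset.card p.roots *
    (Multiset.map (fun a => (t + ti) / 2 - a) p.roots).prod)) * this

/-- Orthogonality in the disc variable `t = exp (iθ)`: `p(cos θ) exp (iω cos θ) |sin θ|` splits as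
`t ^ n B(t) + t⁻¹ ^ n B(t⁻¹)` with `B` analytic in the disc. -/
theorem weighted_series (ω : ℝ) (n : ℕ) (hn : 1 ≤ n) (p : Polynomial ℂ) (hp : IsOrthoPoly ω n p) :
    ∃ (b : ℕ → ℂ) (C : ℝ), (∀ j, ‖b j‖ ≤ C / ((j : ℝ) + 1) ^ 2) ∧
      ∀ θ : ℝ, p.eval (Real.cos θ : ℂ) * exp (I * ω * Real.cos θ) * |Real.sin θ| =
        exp (θ * I) ^ n * ∑' j, b j * exp (θ * I) ^ j +
        exp (-(θ * I)) ^ n * ∑' j, b j * exp (-(θ * I)) ^ j := by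
  set F : ℝ → ℂ := fun x => p.eval (x : ℂ) * exp (I * ω * x) with hF
  have hFc : ContDiff ℝ 2 F := contDiff_weighted ω p
  obtain ⟨C, hC⟩ := cosCoeff_decay F hFc
  have hC0 : 0 ≤ C := by have := (norm_nonneg _).trans (hC 0); simpa using this
  refine ⟨fun j => cosCoeff F (j + n), C, fun j => (hC _).trans ?_, fun θ => ?_⟩
  · gcongr; simp
  have hs2 : Summable fun j : ℕ => C / ((j : ℝ) + 1) ^ 2 := by
    have := (Real.summable_one_div_nat_add_rpow 1 2).mpr (by norm_num)
    refine (this.mul_left C).congr fun j => ?_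
    rw [abs_of_pos (by positivity), Real.rpow_two]; ring
  have hsum : ∀ t : ℂ, ‖t‖ = 1 → Summable fun j => cosCoeff F j * t ^ j := by
    intro t ht
    refine Summable.of_norm_bounded hs2 fun j => ?_
    rw [norm_mul, norm_pow, ht, one_pow, mul_one]; exact hC j
  have hsh : ∀ t : ℂ, ‖t‖ = 1 →
      ∑' j, cosCoeff F j * t ^ j = t ^ n * ∑' j, cosCoeff F (j + n) * t ^ j := by
    intro t ht
    rw [← (hsum t ht).sum_add_tsum_nat_add n, Finset.sum_eq_zero, zero_add, ← tsum_mul_left]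
    · congr 1; ext j; ring
    · intro i hi
      rw [cosCoeff_eq_zero ω n p hp i (Finset.mem_range.mp hi), zero_mul]
  have h1 : ‖exp (θ * I)‖ = 1 := norm_exp_ofReal_mul_I θ
  have h2 : ‖exp (-(θ * I))‖ = 1 := by rw [exp_neg, norm_inv, h1, inv_one]
  have key := (cos_series F hFc (cosCoeff_eq_zero ω n p hp 0 (by omega)) θ).tsum_eq
  simp only [mul_add] at key
  rw [(hsum _ h1).tsum_add (hsum _ h2), hsh _ h1, hsh _ h2] at key
  exact key.symm

/-- The polynomial `p((t + t⁻¹)/2)` multiplied by `(2t) ^ n exp (iωt/2)` is bounded near the origin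
uniformly in `n`. -/
theorem rootProd_bound (lam r : ℝ) (hlam : 0 ≤ lam) (hr0 : 0 < r) (hr1 : r < 1) (n : ℕ)
    (hn : 1 ≤ n) (hq : (r ^ 2 * Real.exp (lam * (r + 1 / r) / 2)) ^ n ≤ (1 - r) ^ 2 / 8)
    (p : Polynomial ℂ) (hp : IsOrthoPoly (n * lam) n p) (t₀ : ℂ) (ht₀ : ‖t₀‖ ≤ r / 2) :
    ‖exp (I * (n * lam) / 2 * t₀) * (p.roots.map fun ζ => 1 - 2 * ζ * t₀ + t₀ ^ 2).prod‖
      ≤ 32 / (1 - r) := by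
  obtain ⟨b, C, hb, hrel⟩ := weighted_series _ n hn p hp
  set ω : ℝ := n * lam with hω
  set B : ℂ → ℂ := fun t => ∑' j, b j * t ^ j with hB
  set ρ : ℂ → ℂ := fun t => (1 - t ^ 2) ^ (1 / 2 : ℂ) with hρ
  set P : ℂ → ℂ := fun t => (p.roots.map fun ζ => 1 - 2 * ζ * t + t ^ 2).prod with hP
  set y : ℂ → ℂ := fun t => B t * exp (-(I * ω * t / 2)) / ρ t with hy
  set Y : ℂ → ℂ := fun t => 1 / 2 * exp (I * ω * t / 2) * ((1 / 2) ^ n * P t) * ρ t with hY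
  set Φ : ℂ → ℂ := fun t => t ^ (2 * n) * exp (I * ω * (t - t⁻¹) / 2) with hΦ
  have hdeg := hp.2.1
  have hB1 : B 1 = 0 := by
    have := hrel 0
    simp only [Real.sin_zero, abs_zero, ofReal_zero, mul_zero, zero_mul, exp_zero, neg_zero,
      one_pow, one_mul] at this
    have h2 : (2 : ℂ) * B 1 = 0 := by simp only [hB, one_pow]; rw [two_mul]; exact this.symm
    simpa using h2
  have hB2 : B (-1) = 0 := by
    have := hrel Real.pi
    have e : exp (-(Real.pi * I)) = -1 := by rw [exp_neg, exp_pi_mul_I]; norm_num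
    simp only [Real.sin_pi, abs_zero, ofReal_zero, mul_zero, exp_pi_mul_I, e] at this
    have h2 : (2 * (-1) ^ n : ℂ) * B (-1) = 0 := by
      simp only [hB]; rw [mul_assoc, two_mul]; exact this.symm
    have h3 : (2 * (-1) ^ n : ℂ) ≠ 0 := by simp
    exact (mul_eq_zero.mp h2).resolve_left h3
  obtain ⟨C', hC', hBb⟩ := tsum_pow_bound b C hb (by simpa [hB] using hB1) hB2
  have hyd : DiffContOnCl ℂ y (Metric.ball 0 1) :=
    y_diffContOnCl B (fun t => exp (-(I * ω * t / 2))) C' (tsum_pow_diffContOnCl b C hb)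
      (by fun_prop) hBb
  have hPd : Differentiable ℂ P := by
    have : ∀ s : Multiset ℂ, Differentiable ℂ fun t : ℂ =>
        (s.map fun ζ => 1 - 2 * ζ * t + t ^ 2).prod := by
      intro s
      induction s using Multiset.induction with
      | empty => simp
      | cons a s ih => simp only [Multiset.map_cons, Multiset.prod_cons]; fun_prop
    exact this _
  have hYd : DiffContOnCl ℂ Y (Metric.ball 0 1) := by
    have h1 : Differentiable ℂ fun t => 1 / 2 * exp (I * ω * t / 2) * ((1 / 2) ^ n * P t) := by
      fun_prop
    exact h1.diffContOnCl.smul rho_diffContOnCl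
  -- the jump relation on the unit circle, `σ = ± 1`
  have hjump : ∀ t ti σ S : ℂ, t * ti = 1 → ρ t = -σ * I * t * ρ ti → ρ t * ρ ti = 2 * S →
      ρ t ≠ 0 → ρ ti ≠ 0 → p.eval ((t + ti) / 2) * exp (I * ω * ((t + ti) / 2)) * S
        = t ^ n * B t + ti ^ n * B ti → y ti = Y t + σ * I * t * Φ t * y t := by
    intro t ti σ S h1 h2 h3 h6 h4 h5
    have ht : t ≠ 0 := left_ne_zero_of_mul_eq_one h1
    have hti : t⁻¹ = ti := inv_eq_of_mul_eq_one_right h1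
    have hPt := eval_joukowski p hp.1 t ti h1
    rw [hdeg] at hPt
    have hσ : σ * I * t = -(ρ t / ρ ti) := by rw [h2]; field_simp
    have hX : exp (I * ω * t / 2) = exp (-(I * ω * ti / 2)) * exp (I * ω * ((t + ti) / 2)) := by
      rw [← exp_add]; congr 1; ring
    have hΦt : Φ t = t ^ (2 * n) * (exp (I * ω * t / 2) * exp (-(I * ω * ti / 2))) := by
      simp only [hΦ]; rw [← exp_add, hti]; congr 2; ring
    have hpow : t ^ n * ti ^ n = 1 := by rw [← mul_pow, h1, one_pow]
    have hcan : exp (I * ω * t / 2) * exp (-(I * ω * t / 2)) = 1 := by rw [← exp_add]; simp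
    rw [hσ, hΦt]
    have hYt : Y t = 1 / 2 * exp (I * ω * t / 2) * (t ^ n * p.eval ((t + ti) / 2)) * ρ t := by
      rw [hPt]
    rw [hYt]
    simp only [hy]
    have e1 : -(ρ t / ρ ti) * (t ^ (2 * n) * (exp (I * ω * t / 2) * exp (-(I * ω * ti / 2)))) *
        (B t * exp (-(I * ω * t / 2)) / ρ t) =
        -(t ^ (2 * n) * exp (-(I * ω * ti / 2)) * B t) / ρ ti := by
      field_simp
      linear_combination (-B t) * hcan
    rw [e1, div_eq_iff h4, add_mul, div_mul_cancel₀ _ h4]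
    have e2 : B ti = t ^ n * (p.eval ((t + ti) / 2) * exp (I * ω * ((t + ti) / 2)) * S)
        - t ^ (2 * n) * B t := by
      rw [h5]; linear_combination (-B ti) * hpow
    have e3 : 1 / 2 * exp (I * ω * t / 2) * (t ^ n * p.eval ((t + ti) / 2)) * ρ t * ρ ti
        = exp (I * ω * t / 2) * (t ^ n * p.eval ((t + ti) / 2)) * S := by
      linear_combination (1 / 2 * exp (I * ω * t / 2) * (t ^ n * p.eval ((t + ti) / 2))) * h3
    rw [e3, e2, hX]; ring
  -- at `t = ±1` both sides vanish, since `ρ` does and division by zero gives zero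
  have hdeg0 : ∀ t ti σ : ℂ, t ^ 2 = 1 → ti ^ 2 = 1 → y ti = Y t + σ * I * t * Φ t * y t := by
    intro t ti σ h1 h2
    have e1 : ρ t = 0 := by simp [hρ, h1]
    have e2 : ρ ti = 0 := by simp [hρ, h2]
    simp [hy, hY, e1, e2]
  have hcosR : ∀ θ : ℝ, ((Real.cos θ : ℝ) : ℂ) = (exp (θ * I) + exp (-(θ * I))) / 2 := by
    intro θ; rw [ofReal_cos, Complex.cos, neg_mul]
  have hne : ∀ t : ℂ, ‖t‖ = 1 → t ^ 2 ≠ 1 → ρ t ≠ 0 := by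
    intro t ht h1
    simp only [hρ, Ne, cpow_eq_zero_iff]
    exact fun h => slitPlane_ne_zero (one_sub_sq_mem_slitPlane t ht.le h1) h.1
  have hmul : ∀ θ : ℝ, exp (θ * I) * exp (-(θ * I)) = 1 := fun θ => by rw [← exp_add]; simp
  have hn1 : ∀ θ : ℝ, ‖exp (θ * I)‖ = 1 := fun θ => norm_exp_ofReal_mul_I θ
  have hn2 : ∀ θ : ℝ, ‖exp (-(θ * I))‖ = 1 := fun θ => by
    rw [exp_neg, norm_inv, hn1, inv_one]
  have hsq : ∀ θ : ℝ, (exp (θ * I) ^ 2 = 1 ↔ exp (-(θ * I)) ^ 2 = 1) := by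
    intro θ; rw [exp_neg, inv_pow, inv_eq_one]
  have hsin0 : ∀ θ : ℝ, Real.sin θ = 0 → exp (θ * I) ^ 2 = 1 := by
    intro θ h0
    have : Real.cos θ ^ 2 = 1 := by have := Real.sin_sq_add_cos_sq θ; rw [h0] at this; linarith
    rw [exp_mul_I, ← ofReal_cos, ← ofReal_sin, h0]
    simp only [ofReal_zero, zero_mul, add_zero]
    exact_mod_cast this
  have hsin1 : ∀ θ : ℝ, exp (θ * I) ^ 2 = 1 → Real.sin θ = 0 := by
    intro θ h
    have h1 : exp (-(θ * I)) = exp (θ * I) := by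
      have := hmul θ
      calc exp (-(θ * I)) = (exp (θ * I) ^ 2) * exp (-(θ * I)) := by rw [h, one_mul]
        _ = exp (θ * I) * (exp (θ * I) * exp (-(θ * I))) := by ring
        _ = _ := by rw [this, mul_one]
    have : ((Real.sin θ : ℝ) : ℂ) = 0 := by
      rw [ofReal_sin, Complex.sin, neg_mul, h1, sub_self]; simp
    exact_mod_cast this
  have hu : ∀ θ ∈ Icc (0 : ℝ) Real.pi, y (exp (-(θ * I))) =
      Y (exp (θ * I)) + I * exp (θ * I) * Φ (exp (θ * I)) * y (exp (θ * I)) := by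
    intro θ hθ
    by_cases h0 : Real.sin θ = 0
    · have := hdeg0 _ _ 1 (hsin0 θ h0) ((hsq θ).mp (hsin0 θ h0))
      simpa using this
    · have hpos : 0 < Real.sin θ :=
        lt_of_le_of_ne (Real.sin_nonneg_of_nonneg_of_le_pi hθ.1 hθ.2) (Ne.symm h0)
      have h1 : exp (θ * I) ^ 2 ≠ 1 := fun h => h0 (hsin1 θ h)
      obtain ⟨r1, r2⟩ := rho_upper θ hpos hθ.1 hθ.2
      have hr := hrel θ
      rw [hcosR, abs_of_pos hpos] at hr
      have := hjump (exp (θ * I)) (exp (-(θ * I))) 1 (Real.sin θ : ℝ) (hmul θ)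
        (by simpa [hρ] using r2) r1 (hne _ (hn1 θ) h1)
        (hne _ (hn2 θ) fun h => h1 ((hsq θ).mpr h)) hr
      simpa using this
  have hl : ∀ θ ∈ Icc Real.pi (2 * Real.pi), y (exp (-(θ * I))) =
      Y (exp (θ * I)) - I * exp (θ * I) * Φ (exp (θ * I)) * y (exp (θ * I)) := by
    intro θ hθ
    by_cases h0 : Real.sin θ = 0
    · have := hdeg0 _ _ (-1) (hsin0 θ h0) ((hsq θ).mp (hsin0 θ h0))
      rw [this]; ring
    · have hsn : Real.sin (2 * Real.pi - θ) = -Real.sin θ := Real.sin_two_pi_sub θ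
      have hpos : 0 < Real.sin (2 * Real.pi - θ) :=
        lt_of_le_of_ne (Real.sin_nonneg_of_nonneg_of_le_pi (by linarith [hθ.2])
          (by linarith [hθ.1])) (by rw [hsn]; exact fun h => h0 (by linarith))
      have h1 : exp (θ * I) ^ 2 ≠ 1 := fun h => h0 (hsin1 θ h)
      obtain ⟨r1, r2⟩ := rho_upper (2 * Real.pi - θ) hpos (by linarith [hθ.2]) (by linarith [hθ.1])
      have c1 : exp (((2 * Real.pi - θ : ℝ) : ℂ) * I) = exp (-(θ * I)) := by
        have : ((2 * Real.pi - θ : ℝ) : ℂ) * I = -(θ * I) + 2 * Real.pi * I := by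
          push_cast; ring
        rw [this, exp_add, exp_two_pi_mul_I, mul_one]
      have c2 : exp (-(((2 * Real.pi - θ : ℝ) : ℂ) * I)) = exp (θ * I) := by
        rw [exp_neg, c1, exp_neg, inv_inv]
      rw [c1, c2] at r1 r2
      have hr := hrel θ
      have habs : |Real.sin θ| = -Real.sin θ := abs_of_neg (by linarith)
      rw [hcosR, habs] at hr
      have r3 : ρ (exp (θ * I)) = -(-1 : ℂ) * I * exp (θ * I) * ρ (exp (-(θ * I))) := by
        have r2' : ρ (exp (-(θ * I))) = -I * exp (-(θ * I)) * ρ (exp (θ * I)) := r2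
        rw [r2']
        linear_combination (ρ (exp (θ * I)) * I ^ 2) * hmul θ + ρ (exp (θ * I)) * I_sq
      have r4 : ρ (exp (θ * I)) * ρ (exp (-(θ * I))) = 2 * ((-Real.sin θ : ℝ) : ℂ) := by
        rw [mul_comm, ← hsn]; exact r1
      have := hjump (exp (θ * I)) (exp (-(θ * I))) (-1) (-Real.sin θ : ℝ) (hmul θ)
        r3 r4 (hne _ (hn1 θ) h1) (hne _ (hn2 θ) fun h => h1 ((hsq θ).mpr h)) hr
      rw [this]; ring
  have hω0 : 0 ≤ ω := by positivity
  have hΦd : DifferentiableOn ℂ Φ {0}ᶜ := by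
    intro t ht
    have ht' : t ≠ 0 := ht
    have : DifferentiableAt ℂ Φ t := by
      simp only [hΦ]
      have := differentiableAt_inv (𝕜 := ℂ) ht'
      fun_prop (disch := assumption)
    exact this.differentiableWithinAt
  have hΦs : ∀ s : ℝ, r ≤ |s| → |s| ≤ 1 → ‖Φ s‖ ≤ s ^ 2 := by
    intro s _ hs1
    -- the exponential factor is unimodular on the real axis
    have : I * ω * ((s : ℂ) - (s : ℂ)⁻¹) / 2 = ((ω * (s - s⁻¹) / 2 : ℝ) : ℂ) * I := by
      push_cast; ring
    simp only [hΦ]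
    rw [norm_mul, this, norm_exp_ofReal_mul_I, mul_one, norm_pow, norm_real, Real.norm_eq_abs,
      ← sq_abs s]
    exact pow_le_pow_of_le_one (abs_nonneg _) hs1 (by omega)
  have hΦr : ∀ t : ℂ, ‖t‖ = r →
      ‖Φ t‖ ≤ (r ^ 2 * Real.exp (lam * (r + 1 / r) / 2)) ^ n := by
    intro t ht
    simp only [hΦ]
    rw [norm_mul, norm_pow, ht, mul_pow, ← pow_mul, norm_exp, ← Real.exp_nat_mul]
    gcongr
    refine (re_le_norm _).trans ?_
    rw [norm_div, norm_mul, norm_mul, norm_I, norm_real, Real.norm_of_nonneg hω0, one_mul]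
    have : ‖t - t⁻¹‖ ≤ r + 1 / r := by
      refine (norm_sub_le _ _).trans ?_
      rw [norm_inv, ht, one_div]
    calc _ ≤ ω * (r + 1 / r) / 2 := by simp only [Complex.norm_ofNat]; gcongr
      _ = _ := by rw [hω]; ring
  have main := apriori y Y Φ r _ hr0 hr1 (by positivity) hq hyd hYd hΦd hΦs hΦr hu hl t₀ ht₀
  have hY0 : ‖Y 0‖ = 1 / 2 * (1 / 2) ^ n := by simp [hY, hP, hρ]
  have hYt : ‖Y t₀‖ = 1 / 2 * (1 / 2) ^ n * (‖exp (I * (n * lam) / 2 * t₀) * P t₀‖ * ‖ρ t₀‖) := by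
    have : I * ω * t₀ / 2 = I * (n * lam) / 2 * t₀ := by rw [hω]; push_cast; ring
    simp only [hY, this, norm_mul, norm_pow]
    have h2 : ‖(1 / 2 : ℂ)‖ = 1 / 2 := by norm_num
    rw [h2]; ring
  rw [hY0, hYt] at main
  have hpos : (0 : ℝ) < 1 / 2 * (1 / 2) ^ n := by positivity
  have main2 : ‖exp (I * (n * lam) / 2 * t₀) * P t₀‖ * ‖ρ t₀‖ ≤ 16 / (1 - r) := by
    rw [mul_comm (16 / (1 - r))] at main
    exact le_of_mul_le_mul_left main hpos
  have hρ0 : 1 / 2 ≤ ‖ρ t₀‖ := by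
    have h1 : ‖ρ t₀‖ = ‖1 - t₀ ^ 2‖ ^ (1 / 2 : ℝ) := by
      have := Complex.norm_cpow_real (1 - t₀ ^ 2) (1 / 2)
      push_cast at this; exact this
    have h2 : 1 / 2 ≤ ‖1 - t₀ ^ 2‖ := by
      have := norm_sub_norm_le 1 (t₀ ^ 2)
      rw [norm_one, norm_pow] at this
      nlinarith [norm_nonneg t₀]
    rw [h1, ← Real.sqrt_eq_rpow]
    refine Real.le_sqrt_of_sq_le ?_
    linarith
  set X := ‖exp (I * (n * lam) / 2 * t₀) * P t₀‖ with hX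
  have hXn : 0 ≤ X := norm_nonneg _
  have h1r : 0 < 1 - r := by linarith
  rw [le_div_iff₀ h1r] at main2 ⊢
  nlinarith [mul_le_mul_of_nonneg_left hρ0 hXn]

/-! ### The critical radius and the moments of the equilibrium measure -/

/-- The radius `r = λ₀ / (2 + √(λ₀² + 4))`, for which `h λ₀ = 0` says that
`r ^ 2 exp (λ₀ (r + 1/r) / 2) = 1`. -/
theorem exists_radius (lam lam0 : ℝ) (hlam0pos : 0 < lam0) (hlam0 : h lam0 = 0)
    (hlt : lam < lam0) :
    ∃ r : ℝ, 0 < r ∧ r < 1 ∧ r ^ 2 * Real.exp (lam * (r + 1 / r) / 2) < 1 := by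
  set s := Real.sqrt (lam0 ^ 2 + 4) with hs
  have hs2 : s ^ 2 = lam0 ^ 2 + 4 := Real.sq_sqrt (by positivity)
  have hs0 : 0 ≤ s := Real.sqrt_nonneg _
  have hsl : lam0 < s + 2 := by nlinarith
  have hspos : 0 < s := by nlinarith
  have hlog : 2 * Real.log ((2 + s) / lam0) = s := by
    have := hlam0; rw [h, ← hs] at this; linarith
  refine ⟨lam0 / (2 + s), by positivity, by rw [div_lt_one (by positivity)]; linarith, ?_⟩
  have e1 : (lam0 / (2 + s)) ^ 2 = Real.exp (-s) := by
    have : lam0 / (2 + s) = Real.exp (-Real.log ((2 + s) / lam0)) := by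
      rw [Real.exp_neg, Real.exp_log (by positivity), inv_div]
    rw [this, ← Real.exp_nat_mul]; congr 1; push_cast; linarith
  have e2 : lam0 / (2 + s) + 1 / (lam0 / (2 + s)) = 2 * s / lam0 := by
    field_simp; nlinarith
  rw [e1, e2, ← Real.exp_add, Real.exp_lt_one_iff]
  have : lam * (2 * s / lam0) / 2 = lam / lam0 * s := by ring
  rw [this]
  have : lam / lam0 < 1 := by rwa [div_lt_one hlam0pos]
  nlinarith

/-- The substitution `x = cos θ`. -/
theorem target_integral (lam : ℝ) (k : ℕ) :
    (∫ x in (-1 : ℝ)..1, (x : ℂ) ^ k * (2 + I * (lam : ℂ) * (x : ℂ)) /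
          (2 * (Real.pi : ℂ) * (Real.sqrt (1 - x ^ 2) : ℂ))) =
    1 / (2 * Real.pi) * ∫ θ in (0 : ℝ)..Real.pi,
      (Real.cos θ : ℂ) ^ k * (2 + I * lam * Real.cos θ) := by
  have him : Set.image Real.cos (Ioo 0 Real.pi) = Ioo (-1) 1 := by
    ext x
    constructor
    · rintro ⟨θ, hθ, rfl⟩
      constructor
      · rw [← Real.cos_pi]
        exact Real.cos_lt_cos_of_nonneg_of_le_pi hθ.1.le le_rfl hθ.2
      · rw [← Real.cos_zero]
        exact Real.cos_lt_cos_of_nonneg_of_le_pi le_rfl hθ.2.le hθ.1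
    · intro hx
      refine ⟨Real.arccos x, ⟨Real.arccos_pos.mpr hx.2, ?_⟩, Real.cos_arccos hx.1.le hx.2.le⟩
      refine lt_of_le_of_ne (Real.arccos_le_pi x) fun e => ?_
      have := Real.cos_arccos hx.1.le hx.2.le
      rw [e, Real.cos_pi] at this
      linarith [hx.1]
  rw [intervalIntegral.integral_of_le (by norm_num), integral_Ioc_eq_integral_Ioo, ← him,
    integral_image_eq_integral_abs_deriv_smul measurableSet_Ioo
      (fun x _ => (Real.hasDerivAt_cos x).hasDerivWithinAt)
      (Real.injOn_cos.mono Ioo_subset_Icc_self),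
    intervalIntegral.integral_of_le Real.pi_pos.le, integral_Ioc_eq_integral_Ioo,
    ← integral_const_mul]
  refine setIntegral_congr_fun measurableSet_Ioo fun θ hθ => ?_
  have hs : 0 < Real.sin θ := Real.sin_pos_of_pos_of_lt_pi hθ.1 hθ.2
  have hsq : Real.sqrt (1 - Real.cos θ ^ 2) = Real.sin θ := by
    rw [← Real.sin_sq, Real.sqrt_sq hs.le]
  simp only [abs_neg, abs_of_pos hs, hsq, real_smul]
  have h1 : ((Real.sin θ : ℝ) : ℂ) ≠ 0 := by exact_mod_cast hs.ne'
  have h2 : (Real.pi : ℂ) ≠ 0 := by exact_mod_cast Real.pi_ne_zero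
  field_simp

theorem integral_cos_int (m : ℤ) :
    ∫ θ in (0 : ℝ)..Real.pi, Complex.cos (m * (θ : ℂ)) = if m = 0 then (Real.pi : ℂ) else 0 := by
  split_ifs with hm
  · subst hm; simp
  · have hR : (m : ℝ) ≠ 0 := by exact_mod_cast hm
    have : ∀ θ : ℝ, Complex.cos (m * (θ : ℂ)) = ((Real.cos (m * θ) : ℝ) : ℂ) := by
      intro θ; push_cast; rfl
    simp only [this]
    rw [intervalIntegral.integral_ofReal, intervalIntegral.integral_comp_mul_left _ hR, integral_cos]
    simp [Real.sin_int_mul_pi]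

/-- The moments of the equilibrium measure against `x ^ k T_j(x)`, after `x = cos θ`. -/
noncomputable def mixedMoment (lam : ℝ) (k : ℕ) (j : ℤ) : ℂ :=
  1 / (2 * Real.pi) * ∫ θ in (0 : ℝ)..Real.pi, (Real.cos θ : ℂ) ^ k *
    (Polynomial.Chebyshev.T ℂ j).eval (Real.cos θ : ℂ) * (2 + I * lam * Real.cos θ)

theorem mixedMoment_zero (lam : ℝ) (j : ℤ) :
    mixedMoment lam 0 j = (if j = 0 then 1 else 0) +
      I * lam / 4 * ((if j + 1 = 0 then 1 else 0) + (if j - 1 = 0 then 1 else 0)) := by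
  have hpi : (Real.pi : ℂ) ≠ 0 := by exact_mod_cast Real.pi_ne_zero
  have e : ∀ θ : ℝ, (Real.cos θ : ℂ) ^ 0 * (Polynomial.Chebyshev.T ℂ j).eval (Real.cos θ : ℂ) *
      (2 + I * lam * Real.cos θ) = 2 * Complex.cos (j * (θ : ℂ)) +
      I * lam / 2 * (Complex.cos (((j + 1 : ℤ) : ℂ) * (θ : ℂ)) +
        Complex.cos (((j - 1 : ℤ) : ℂ) * (θ : ℂ))) := by
    intro θ
    rw [ofReal_cos, Polynomial.Chebyshev.T_complex_cos]
    have : ((j + 1 : ℤ) : ℂ) * (θ : ℂ) = j * θ + θ := by push_cast; ring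
    have h2 : ((j - 1 : ℤ) : ℂ) * (θ : ℂ) = j * θ - θ := by push_cast; ring
    rw [this, h2, Complex.cos_add, Complex.cos_sub]; ring
  rw [mixedMoment]
  simp only [e]
  have hc : ∀ m : ℤ, IntervalIntegrable (fun θ : ℝ => Complex.cos (m * (θ : ℂ))) volume 0 Real.pi :=
    fun m => Continuous.intervalIntegrable (by fun_prop) _ _
  rw [intervalIntegral.integral_add ((hc j).const_mul 2) (((hc _).add (hc _)).const_mul _),
    intervalIntegral.integral_const_mul, intervalIntegral.integral_const_mul,
    intervalIntegral.integral_add (hc _) (hc _), integral_cos_int, integral_cos_int,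
    integral_cos_int]
  split_ifs <;> field_simp <;> ring

theorem mixedMoment_succ (lam : ℝ) (k : ℕ) (j : ℤ) :
    mixedMoment lam (k + 1) j = (mixedMoment lam k (j + 1) + mixedMoment lam k (j - 1)) / 2 := by
  have hT : ∀ i : ℤ, Continuous fun θ : ℝ => (Polynomial.Chebyshev.T ℂ i).eval (Real.cos θ : ℂ) :=
    fun i => (Polynomial.Chebyshev.T ℂ i).continuous.comp (by fun_prop)
  have hc : ∀ i : ℤ, IntervalIntegrable (fun θ : ℝ => (Real.cos θ : ℂ) ^ k *
    (Polynomial.Chebyshev.T ℂ i).eval (Real.cos θ : ℂ) * (2 + I * lam * Real.cos θ))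
      volume 0 Real.pi := fun i => by
    have := hT i
    exact Continuous.intervalIntegrable (by fun_prop) _ _
  simp only [mixedMoment]
  rw [← mul_add, ← intervalIntegral.integral_add (hc _) (hc _), mul_div_assoc,
    ← intervalIntegral.integral_div]
  congr 2
  ext θ
  have := congrArg (Polynomial.eval (Real.cos θ : ℂ)) (Polynomial.Chebyshev.T_add_two ℂ (j - 1))
  rw [show j - 1 + 2 = j + 1 by ring, show j - 1 + 1 = j by ring] at this
  simp only [Polynomial.eval_sub, Polynomial.eval_mul, Polynomial.eval_ofNat,
    Polynomial.eval_X] at this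
  rw [this]; ring

/-! ### Formal logarithmic derivatives -/

/-- The formal Taylor series at `0`. -/
noncomputable def taylorSeries (f : ℂ → ℂ) : PowerSeries ℂ :=
  PowerSeries.mk fun j => iteratedDeriv j f 0 / (j.factorial : ℂ)

theorem taylorSeries_mul (f g : ℂ → ℂ) (hf : Differentiable ℂ f) (hg : Differentiable ℂ g) :
    taylorSeries (fun t => f t * g t) = taylorSeries f * taylorSeries g := by
  ext j
  rw [PowerSeries.coeff_mul, Finset.Nat.sum_antidiagonal_eq_sum_range_succ
    (fun a b => PowerSeries.coeff a (taylorSeries f) * PowerSeries.coeff b (taylorSeries g))]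
  simp only [taylorSeries, PowerSeries.coeff_mk]
  have := iteratedDeriv_mul (n := j) (x := (0 : ℂ)) hf.contDiff.contDiffAt hg.contDiff.contDiffAt
  rw [show (fun t => f t * g t) = f * g from rfl, this, Finset.sum_div]
  refine Finset.sum_congr rfl fun i hi => ?_
  have hij : i ≤ j := by have := Finset.mem_range.mp hi; omega
  rw [Nat.cast_choose ℂ hij]
  have h1 : (j.factorial : ℂ) ≠ 0 := by exact_mod_cast j.factorial_ne_zero
  have h2 : (i.factorial : ℂ) ≠ 0 := by exact_mod_cast i.factorial_ne_zero
  have h3 : ((j - i).factorial : ℂ) ≠ 0 := by exact_mod_cast (j - i).factorial_ne_zero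
  field_simp

theorem taylorSeries_deriv (f : ℂ → ℂ) :
    PowerSeries.derivative ℂ (taylorSeries f) = taylorSeries (deriv f) := by
  ext j
  simp only [PowerSeries.coeff_derivative, taylorSeries, PowerSeries.coeff_mk,
    iteratedDeriv_succ']
  rw [Nat.factorial_succ]
  have h1 : (j.factorial : ℂ) ≠ 0 := by exact_mod_cast j.factorial_ne_zero
  have h2 : (j : ℂ) + 1 ≠ 0 := by exact_mod_cast j.succ_ne_zero
  push_cast; field_simp

theorem taylorSeries_quadratic (a : ℂ) :
    taylorSeries (fun t => 1 - 2 * a * t + t ^ 2) =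
      1 - PowerSeries.C (2 * a) * PowerSeries.X + PowerSeries.X ^ 2 := by
  have d1 : deriv (fun t : ℂ => 1 - 2 * a * t + t ^ 2) = fun t => -(2 * a) + 2 * t := by
    ext t
    have h1 : HasDerivAt (fun t : ℂ => 1 - 2 * a * t + t ^ 2)
        (-(2 * a * 1) + (2 : ℕ) * t ^ (2 - 1)) t :=
      (((hasDerivAt_id t).const_mul (2 * a)).const_sub 1).add (hasDerivAt_pow 2 t)
    rw [h1.deriv]; simp
  have d2 : deriv (fun t : ℂ => -(2 * a) + 2 * t) = fun _ => 2 := by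
    ext t
    have h1 : HasDerivAt (fun t : ℂ => -(2 * a) + 2 * t) (2 * 1) t :=
      ((hasDerivAt_id t).const_mul 2).const_add _
    rw [h1.deriv]; simp
  ext j
  rcases j with _ | _ | _ | j
  · simp [taylorSeries]
  · simp [taylorSeries, d1, PowerSeries.coeff_X_pow, PowerSeries.coeff_one, iteratedDeriv_succ']
  · simp [taylorSeries, d1, d2, PowerSeries.coeff_X_pow, PowerSeries.coeff_one,
      iteratedDeriv_succ']
  · simp [taylorSeries, d1, d2, PowerSeries.coeff_X_pow, PowerSeries.coeff_one,
      iteratedDeriv_succ']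

/-- The generating series `∑ T_{j+1}(a) X ^ j` of the Chebyshev polynomials. -/
noncomputable def chebSeries (a : ℂ) : PowerSeries ℂ :=
  PowerSeries.mk fun j => (Polynomial.Chebyshev.T ℂ ((j : ℤ) + 1)).eval a

theorem quadratic_mul_chebSeries (a : ℂ) :
    (1 - PowerSeries.C (2 * a) * PowerSeries.X + PowerSeries.X ^ 2) * chebSeries a =
      PowerSeries.C a - PowerSeries.X := by
  have e : (1 - PowerSeries.C (2 * a) * PowerSeries.X + PowerSeries.X ^ 2) * chebSeries a =
      chebSeries a - PowerSeries.C (2 * a) * (PowerSeries.X * chebSeries a)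
        + PowerSeries.X * (PowerSeries.X * chebSeries a) := by ring
  rw [e]
  ext j
  rcases j with _ | _ | j
  · simp [chebSeries]
  · simp only [map_add, map_sub, PowerSeries.coeff_succ_X_mul, PowerSeries.coeff_C_mul, chebSeries,
      PowerSeries.coeff_mk, PowerSeries.coeff_C, PowerSeries.coeff_X,
      PowerSeries.coeff_zero_X_mul]
    norm_num [Polynomial.Chebyshev.T_two]
    ring
  · simp only [map_add, map_sub, PowerSeries.coeff_succ_X_mul, PowerSeries.coeff_C_mul, chebSeries,
      PowerSeries.coeff_mk, PowerSeries.coeff_C, PowerSeries.coeff_X]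
    have := congrArg (Polynomial.eval a) (Polynomial.Chebyshev.T_add_two ℂ ((j : ℤ) + 1))
    simp only [Polynomial.eval_sub, Polynomial.eval_mul, Polynomial.eval_ofNat,
      Polynomial.eval_X] at this
    have h3 : (((j + 1 + 1 : ℕ) : ℤ) + 1) = (j : ℤ) + 1 + 2 := by push_cast; ring
    have h4 : (((j + 1 : ℕ) : ℤ) + 1) = (j : ℤ) + 1 + 1 := by push_cast; ring
    rw [h3, h4, this]
    simp

theorem differentiable_rootProd (c : ℂ) (s : Multiset ℂ) :
    Differentiable ℂ fun t : ℂ => exp (c * t) * (s.map fun ζ => 1 - 2 * ζ * t + t ^ 2).prod := by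
  induction s using Multiset.induction with
  | empty => simp only [Multiset.map_zero, Multiset.prod_zero]; fun_prop
  | cons a s ih =>
    have : (fun t : ℂ => exp (c * t) * ((a ::ₘ s).map fun ζ => 1 - 2 * ζ * t + t ^ 2).prod) =
        fun t => (1 - 2 * a * t + t ^ 2) *
          (exp (c * t) * (s.map fun ζ => 1 - 2 * ζ * t + t ^ 2).prod) := by
      ext t; simp only [Multiset.map_cons, Multiset.prod_cons]; ring
    rw [this]; fun_prop

/-- The logarithmic derivative of `exp (c t) ∏ (1 - 2 ζ t + t ^ 2)` as a formal series. -/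
theorem derivative_taylorSeries_rootProd (c : ℂ) (s : Multiset ℂ) :
    PowerSeries.derivative ℂ (taylorSeries fun t =>
        exp (c * t) * (s.map fun ζ => 1 - 2 * ζ * t + t ^ 2).prod) =
      (taylorSeries fun t => exp (c * t) * (s.map fun ζ => 1 - 2 * ζ * t + t ^ 2).prod) *
        (PowerSeries.C c - 2 * (s.map chebSeries).sum) := by
  induction s using Multiset.induction with
  | empty =>
    simp only [Multiset.map_zero, Multiset.prod_zero, Multiset.sum_zero, mul_one, mul_zero,
      sub_zero]
    rw [taylorSeries_deriv]
    have : deriv (fun t => exp (c * t)) = fun t => c * exp (c * t) := by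
      ext t
      have h1 : HasDerivAt (fun t => exp (c * t)) (exp (c * t) * (c * 1)) t :=
        ((hasDerivAt_id t).const_mul c).cexp
      rw [h1.deriv]; ring
    rw [this]
    ext j
    rw [mul_comm, PowerSeries.coeff_C_mul]
    simp only [taylorSeries, PowerSeries.coeff_mk]
    have hd : Differentiable ℂ fun t => exp (c * t) := by fun_prop
    rw [iteratedDeriv_const_mul c hd.contDiff.contDiffAt]; ring
  | cons a s ih =>
    have : (fun t : ℂ => exp (c * t) * ((a ::ₘ s).map fun ζ => 1 - 2 * ζ * t + t ^ 2).prod) =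
        fun t => (1 - 2 * a * t + t ^ 2) *
          (exp (c * t) * (s.map fun ζ => 1 - 2 * ζ * t + t ^ 2).prod) := by
      ext t; simp only [Multiset.map_cons, Multiset.prod_cons]; ring
    rw [this, taylorSeries_mul _ _ (by fun_prop) (differentiable_rootProd c s), Derivation.leibniz,
      ih, taylorSeries_quadratic, Multiset.map_cons, Multiset.sum_cons]
    have hd : PowerSeries.derivative ℂ
        (1 - PowerSeries.C (2 * a) * PowerSeries.X + PowerSeries.X ^ 2) =
        -(2 * (PowerSeries.C a - PowerSeries.X)) := by
      rw [map_add, map_sub, Derivation.leibniz, PowerSeries.derivative_pow,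
        PowerSeries.derivative_C, PowerSeries.derivative_X, PowerSeries.derivative_one, map_mul,
        map_ofNat]
      simp only [smul_eq_mul]
      push_cast
      ring
    rw [hd, ← quadratic_mul_chebSeries a]
    simp only [smul_eq_mul]
    ring

/-- A uniform bound on the coefficients of a series with constant term `1` bounds the coefficients
of its logarithmic derivative `L`, one at a time. -/
theorem log_derivative_coeff_bound (C R : ℝ) (j : ℕ) :
    ∃ K : ℝ, ∀ x L : PowerSeries ℂ, PowerSeries.coeff 0 x = 1 →
      (∀ i, ‖PowerSeries.coeff i x‖ ≤ C / R ^ i) → PowerSeries.derivative ℂ x = x * L →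
      ‖PowerSeries.coeff j L‖ ≤ K := by
  induction j using Nat.strong_induction_on with
  | _ j ih =>
    choose! K hK using ih
    refine ⟨C / R ^ (j + 1) * (j + 1) + ∑ k ∈ Finset.range j, K k * (C / R ^ (j - k)),
      fun x L h0 hx hd => ?_⟩
    have h1 := congrArg (PowerSeries.coeff j) hd
    rw [PowerSeries.coeff_derivative, mul_comm x L, PowerSeries.coeff_mul,
      Finset.Nat.sum_antidiagonal_eq_sum_range_succ
        (fun a b => PowerSeries.coeff a L * PowerSeries.coeff b x), Finset.sum_range_succ,
      Nat.sub_self, h0, mul_one] at h1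
    have h2 : PowerSeries.coeff j L = PowerSeries.coeff (j + 1) x * (j + 1) -
        ∑ k ∈ Finset.range j, PowerSeries.coeff k L * PowerSeries.coeff (j - k) x := by
      rw [h1]; ring
    rw [h2]
    refine (norm_sub_le _ _).trans (add_le_add ?_ ((norm_sum_le _ _).trans ?_))
    · rw [norm_mul]
      have : ‖(j : ℂ) + 1‖ = j + 1 := by
        rw [← Nat.cast_succ, Complex.norm_natCast]; push_cast; rfl
      rw [this]
      exact mul_le_mul_of_nonneg_right (hx _) (by positivity)
    · refine Finset.sum_le_sum fun k hk => ?_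
      rw [norm_mul]
      have hk' := hK k (Finset.mem_range.mp hk) x L h0 hx hd
      exact mul_le_mul hk' (hx _) (norm_nonneg _) ((norm_nonneg _).trans hk')

/-! ### Limits of the root sums -/

/-- The Chebyshev power sums `∑ T_{j+1}(ζ)` over the roots stay within a bounded
distance, as `n → ∞`, of `n` times those of the equilibrium measure, which are `iλ/4` for `j = 0` and
`0` otherwise. -/
theorem chebSum_bound (lam lam0 : ℝ) (hlam0pos : 0 < lam0) (hlam0 : h lam0 = 0)
    (hnonneg : 0 ≤ lam) (hlt : lam < lam0)
    (N : ℕ) (p : ℕ → Polynomial ℂ) (hp : ∀ n ≥ N, IsOrthoPoly (n * lam) n (p n)) (j : ℕ) :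
    ∃ K : ℝ, ∀ᶠ n : ℕ in Filter.atTop,
      ‖(if j = 0 then I * (n * lam) / 2 else 0) - 2 * ((p n).roots.map fun ζ =>
        (Polynomial.Chebyshev.T ℂ ((j : ℤ) + 1)).eval ζ).sum‖ ≤ K := by
  obtain ⟨r, hr0, hr1, hq⟩ := exists_radius lam lam0 hlam0pos hlam0 hlt
  obtain ⟨K, hK⟩ := log_derivative_coeff_bound (32 / (1 - r)) (r / 2) j
  refine ⟨K, ?_⟩
  have h1r : 0 < 1 - r := by linarith
  have hε : 0 < (1 - r) ^ 2 / 8 := by positivity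
  filter_upwards [(tendsto_pow_atTop_nhds_zero_of_lt_one (by positivity) hq).eventually
    (eventually_le_nhds hε), Filter.eventually_ge_atTop N, Filter.eventually_ge_atTop 1]
    with n hn hnN hn1
  set c : ℂ := I * (n * lam) / 2 with hc
  have hd := differentiable_rootProd c (p n).roots
  have key := hK _ _ ?_ ?_ (derivative_taylorSeries_rootProd c (p n).roots)
  · have hsum : ∀ s : Multiset ℂ, PowerSeries.coeff j (s.map chebSeries).sum =
        (s.map fun ζ => (Polynomial.Chebyshev.T ℂ ((j : ℤ) + 1)).eval ζ).sum := by
      intro s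
      rw [map_multiset_sum, Multiset.map_map]
      congr 2 with ζ
      exact PowerSeries.coeff_mk _ _
    have h2 : (2 : PowerSeries ℂ) = PowerSeries.C 2 := (map_ofNat _ 2).symm
    rwa [map_sub, h2, PowerSeries.coeff_C_mul, hsum, PowerSeries.coeff_C] at key
  · simp [taylorSeries]
  · intro i
    have h1 := Complex.norm_iteratedDeriv_le_of_forall_mem_sphere_norm_le (R := r / 2)
      (C := 32 / (1 - r)) (c := 0) i (by positivity) hd.diffContOnCl fun z hz =>
        rootProd_bound lam r hnonneg hr0 hr1 n hn1 hn (p n) (hp n hnN) z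
          (by simpa using (mem_sphere_zero_iff_norm.mp hz).le)
    simp only [taylorSeries, PowerSeries.coeff_mk]
    rw [norm_div, Complex.norm_natCast, div_le_iff₀ (by exact_mod_cast i.factorial_pos)]
    calc _ ≤ _ := h1
      _ = _ := by ring

theorem tendsto_chebSum_succ (lam lam0 : ℝ) (hlam0pos : 0 < lam0) (hlam0 : h lam0 = 0)
    (hnonneg : 0 ≤ lam) (hlt : lam < lam0)
    (N : ℕ) (p : ℕ → Polynomial ℂ) (hp : ∀ n ≥ N, IsOrthoPoly (n * lam) n (p n)) (j : ℕ) :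
    Filter.Tendsto (fun n : ℕ => 1 / (n : ℂ) * ((p n).roots.map fun ζ =>
        (Polynomial.Chebyshev.T ℂ ((j : ℤ) + 1)).eval ζ).sum) Filter.atTop
      (nhds (if j = 0 then I * lam / 4 else 0)) := by
  obtain ⟨K, hK⟩ := chebSum_bound lam lam0 hlam0pos hlam0 hnonneg hlt N p hp j
  rw [tendsto_iff_norm_sub_tendsto_zero]
  have hlim : Filter.Tendsto (fun n : ℕ => K / 2 / (n : ℝ)) Filter.atTop (nhds 0) :=
    tendsto_const_div_atTop_nhds_zero_nat _
  refine squeeze_zero' (Filter.Eventually.of_forall fun _ => norm_nonneg _) ?_ hlim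
  filter_upwards [hK, Filter.eventually_ge_atTop 1] with n hn hn1
  have hn0 : (n : ℂ) ≠ 0 := by exact_mod_cast (by omega : n ≠ 0)
  set S := ((p n).roots.map fun ζ => (Polynomial.Chebyshev.T ℂ ((j : ℤ) + 1)).eval ζ).sum
  have e : 1 / (n : ℂ) * S - (if j = 0 then I * lam / 4 else 0) =
      -((if j = 0 then I * (n * lam) / 2 else 0) - 2 * S) / (2 * n) := by
    split_ifs <;> field_simp <;> ring
  rw [e, norm_div, norm_neg, norm_mul, Complex.norm_natCast, Complex.norm_ofNat, div_div]
  gcongr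

/-- Power sums against `ζ ^ k T_j(ζ)` and the corresponding moments obey the same recursion in `k`,
coming from `2 x T_j = T_{j+1} + T_{j-1}`. -/
theorem tendsto_mixedSum (lam lam0 : ℝ) (hlam0pos : 0 < lam0) (hlam0 : h lam0 = 0)
    (hnonneg : 0 ≤ lam) (hlt : lam < lam0)
    (N : ℕ) (p : ℕ → Polynomial ℂ) (hp : ∀ n ≥ N, IsOrthoPoly (n * lam) n (p n)) (k : ℕ) :
    ∀ j : ℤ, Filter.Tendsto (fun n : ℕ => 1 / (n : ℂ) * ((p n).roots.map fun ζ =>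
        ζ ^ k * (Polynomial.Chebyshev.T ℂ j).eval ζ).sum) Filter.atTop
      (nhds (mixedMoment lam k j)) := by
  induction k with
  | zero =>
    intro j
    simp only [pow_zero, one_mul]
    rw [mixedMoment_zero]
    rcases eq_or_ne j 0 with rfl | hj
    · norm_num
      refine tendsto_const_nhds.congr' ?_
      filter_upwards [Filter.eventually_ge_atTop N, Filter.eventually_ge_atTop 1] with n hn hn1
      have hn0 : (n : ℂ) ≠ 0 := by exact_mod_cast (by omega : n ≠ 0)
      rw [IsAlgClosed.card_roots_eq_natDegree, (hp n hn).2.1, inv_mul_cancel₀ hn0]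
    · obtain ⟨i, hi⟩ : ∃ i : ℕ, j = (i : ℤ) + 1 ∨ j = -((i : ℤ) + 1) := ⟨j.natAbs - 1, by omega⟩
      have hT := tendsto_chebSum_succ lam lam0 hlam0pos hlam0 hnonneg hlt N p hp i
      have hTj : Polynomial.Chebyshev.T ℂ j = Polynomial.Chebyshev.T ℂ ((i : ℤ) + 1) := by
        rcases hi with rfl | rfl
        · rfl
        · exact Polynomial.Chebyshev.T_neg ..
      rw [hTj]
      convert hT using 2
      rcases eq_or_ne i 0 with rfl | hi0
      · rcases hi with rfl | rfl <;> norm_num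
      · rw [if_neg hj, if_neg (by omega), if_neg (by omega), if_neg hi0]; ring
  | succ k ih =>
    intro j
    rw [mixedMoment_succ]
    refine (((ih (j + 1)).add (ih (j - 1))).div_const 2).congr fun n => ?_
    rw [← mul_add, ← Multiset.sum_map_add, mul_div_assoc, div_eq_mul_inv _ (2 : ℂ),
      ← Multiset.sum_map_mul_right]
    congr 3
    ext ζ
    have := congrArg (Polynomial.eval ζ) (Polynomial.Chebyshev.T_add_two ℂ (j - 1))
    simp only [Polynomial.eval_sub, Polynomial.eval_mul, Polynomial.eval_ofNat,
      Polynomial.eval_X] at this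
    rw [show j - 1 + 2 = j + 1 by ring, show j - 1 + 1 = j by ring] at this
    rw [this]; ring

end

/-- For `0 ≤ λ < λ₀`, the normalized power sums of the roots of `p_n` converge to the
corresponding moments of the equilibrium measure `μ_λ`, whose density on `[−1,1]` is
`(2 + iλx)/(2π√(1 − x²))`: weak-* convergence of the zero counting measures. -/
theorem stmt10 (lam lam0 : ℝ) (hlam0pos : 0 < lam0) (hlam0 : h lam0 = 0)
    (hnonneg : 0 ≤ lam) (hlt : lam < lam0)
    (N : ℕ) (p : ℕ → Polynomial ℂ) (hp : ∀ n ≥ N, IsOrthoPoly (n * lam) n (p n))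
    (k : ℕ) :
    Filter.Tendsto
      (fun n : ℕ => (1 / (n : ℂ)) * (((p n).roots.map (fun ζ => ζ ^ k)).sum))
      Filter.atTop
      (nhds (∫ x in (-1 : ℝ)..1,
        (x : ℂ) ^ k * (2 + Complex.I * (lam : ℂ) * (x : ℂ)) /
          (2 * (Real.pi : ℂ) * (Real.sqrt (1 - x ^ 2) : ℂ)))) := by
  have := tendsto_mixedSum lam lam0 hlam0pos hlam0 hnonneg hlt N p hp k 0
  rw [target_integral]
  simpa [mixedMoment] using this
end

section
/- Fix λ ≥ 0 and define w_λ(z) = −iλ/2 + (2 + iλz)/(2·S(z)) for z ∈ ℂ∖[−1,1]. Then: (i) z·w_λ(z) → 1 as |z| → ∞ (so that w_λ(z) = 1/z + O(1/z²)); and (ii) for every x ∈ (−1, 1), the boundary values satisfy lim_{ε→0⁺} ( w_λ(x + iε) + w_λ(x − iε) ) = −iλ, which is the derivative V′(x) of the external field V(z) = −iλz. -/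
/-!
Write `a = √(z−1)` and `b = √(z+1)`, so that `a² + b² = 2z`, `ab = S(z)` and
`(b − a)(b + a) = 2`. Hence `(b − a)² = 2(z − S)`, `(b + a)² = 2(z + S)` and
`(z − S)(z + S) = 1`. Both roots lie in the closed right half plane and their imaginary parts
have the same sign, because `z − 1` and `z + 1` have the same imaginary part; therefore
`Re(a · conj b) ≥ 0`, so `|b − a| ≤ |b + a|`, that is `|z − S| ≤ |z + S|`. Together with
`(z − S)(z + S) = 1` this gives `|z − S(z)| ≤ 1` for every `z` (`norm_sub_S_le_one`). So
`S(z)/z → 1` at infinity, which selects the correct branch, and (i) follows from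
`z·w = z/S + (iλ/2) · z/(S(z + S))`.

For (ii), `√(z+1)` is continuous at `x ∈ (−1,1)` while `√(z−1)` tends to `±i√(1−x)` from above
and below, so `S` has opposite nonzero boundary values there and the two fractions in the sum
cancel in the limit.
-/

/-- `S(z) = √(z−1)·√(z+1)`, principal branches. -/
noncomputable def S (z : ℂ) : ℂ := (z - 1) ^ (1 / 2 : ℂ) * (z + 1) ^ (1 / 2 : ℂ)

/-- The Cauchy transform `w_λ(z) = −iλ/2 + (2 + iλz)/(2S(z))` of the equilibrium
measure. -/
noncomputable def wCauchy (lam : ℝ) (z : ℂ) : ℂ :=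
  -Complex.I * (lam : ℂ) / 2 + (2 + Complex.I * (lam : ℂ) * z) / (2 * S z)

open Filter Topology Complex

theorem cpow_half_sq (u : ℂ) : (u ^ (1 / 2 : ℂ)) ^ 2 = u := by
  simp [one_div]

theorem S_mul_self (z : ℂ) : S z * S z = z ^ 2 - 1 := by
  calc S z * S z = ((z - 1) ^ (1 / 2 : ℂ)) ^ 2 * ((z + 1) ^ (1 / 2 : ℂ)) ^ 2 := by
        unfold S; ring
    _ = z ^ 2 - 1 := by rw [cpow_half_sq, cpow_half_sq]; ring

/-- The branch of `√(z² − 1)` given by `S` is the one closer to `z`. -/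
theorem norm_sub_S_le_norm_add_S (z : ℂ) : ‖z - S z‖ ≤ ‖z + S z‖ := by
  have ha := cpow_half_sq (z - 1)
  have hb := cpow_half_sq (z + 1)
  have hare : 0 ≤ ((z - 1) ^ (1 / 2 : ℂ)).re := by
    rw [one_div, cpow_inv_two_re]; positivity
  have hbre : 0 ≤ ((z + 1) ^ (1 / 2 : ℂ)).re := by
    rw [one_div, cpow_inv_two_re]; positivity
  have him : 0 ≤ ((z - 1) ^ (1 / 2 : ℂ)).im * ((z + 1) ^ (1 / 2 : ℂ)).im := by
    rw [one_div]
    rcases le_or_gt 0 z.im with h | h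
    · rw [cpow_inv_two_im_eq_sqrt (by simpa using h), cpow_inv_two_im_eq_sqrt (by simpa using h)]
      positivity
    · rw [cpow_inv_two_im_eq_neg_sqrt (by simpa using h),
        cpow_inv_two_im_eq_neg_sqrt (by simpa using h), neg_mul_neg]
      positivity
  unfold S
  generalize (z - 1) ^ (1 / 2 : ℂ) = a at *
  generalize (z + 1) ^ (1 / 2 : ℂ) = b at *
  have hz : z = (a ^ 2 + b ^ 2) / 2 := by rw [ha, hb]; ring
  have h1 : z - a * b = (b - a) ^ 2 / 2 := by rw [hz]; ring
  have h2 : z + a * b = (b + a) ^ 2 / 2 := by rw [hz]; ring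
  have h3 : ‖b - a‖ ≤ ‖b + a‖ := by
    rw [← sq_le_sq₀ (norm_nonneg _) (norm_nonneg _), Complex.sq_norm, Complex.sq_norm,
      normSq_apply, normSq_apply]
    simp only [sub_re, sub_im, add_re, add_im]
    nlinarith [mul_nonneg hare hbre]
  rw [h1, h2, norm_div, norm_div, norm_pow, norm_pow]
  gcongr

theorem norm_sub_S_le_one (z : ℂ) : ‖z - S z‖ ≤ 1 := by
  have h : ‖z - S z‖ * ‖z + S z‖ = 1 := by
    rw [← norm_mul, show (z - S z) * (z + S z) = z ^ 2 - S z * S z by ring, S_mul_self]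
    simp
  nlinarith [norm_sub_S_le_norm_add_S z, norm_nonneg (z - S z)]

theorem tendsto_S_div_self : Tendsto (fun z : ℂ => S z / z) (Bornology.cobounded ℂ) (𝓝 1) := by
  have h0 : Tendsto (fun z : ℂ => (z - S z) * z⁻¹) (Bornology.cobounded ℂ) (𝓝 0) := by
    refine isBoundedUnder_le_mul_tendsto_zero ?_ (tendsto_inv₀_cobounded (α := ℂ))
    exact ⟨1, by simpa using Eventually.of_forall norm_sub_S_le_one⟩
  have h1 : Tendsto (fun z : ℂ => 1 - (z - S z) * z⁻¹) (Bornology.cobounded ℂ) (𝓝 1) := by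
    simpa using h0.const_sub 1
  refine h1.congr' ?_
  filter_upwards [Bornology.eventually_ne_cobounded (0 : ℂ)] with z hz
  field_simp
  ring

theorem tendsto_mul_wCauchy (lam : ℝ) :
    Tendsto (fun z : ℂ => z * wCauchy lam z) (Bornology.cobounded ℂ) (𝓝 1) := by
  have hS := tendsto_S_div_self
  have hinv := tendsto_inv₀_cobounded (α := ℂ)
  -- With `q = S z / z`: `z·w = 1/q + (iλ/2) · (1/z) / (q (1 + q))`.
  have h : Tendsto (fun z : ℂ => (S z / z)⁻¹ +
      I * lam / 2 * (z⁻¹ / (S z / z * (1 + S z / z)))) (Bornology.cobounded ℂ) (𝓝 1) := by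
    have := (hS.inv₀ one_ne_zero).add
      ((hinv.div (hS.mul (hS.const_add 1)) (by norm_num)).const_mul (I * lam / 2))
    simpa using this
  refine h.congr' ?_
  have hq : ∀ᶠ z : ℂ in Bornology.cobounded ℂ, S z / z ≠ 0 := hS.eventually_ne one_ne_zero
  have hq' : ∀ᶠ z : ℂ in Bornology.cobounded ℂ, 1 + S z / z ≠ 0 :=
    (hS.const_add 1).eventually_ne (by norm_num)
  filter_upwards [Bornology.eventually_ne_cobounded (0 : ℂ), hq, hq'] with z hz h1 h2
  have hs : S z ≠ 0 := fun h => h1 (by simp [h])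
  have hzs : z + S z ≠ 0 := fun h => h2 (by field_simp; simpa using h)
  have hsq := S_mul_self z
  unfold wCauchy
  field_simp
  linear_combination (I * lam) * hsq

/-- On the cut, the boundary values of `S` from above and below exist, are nonzero, and are
opposite to each other. -/
theorem exists_tendsto_S (x : ℝ) (hx : x ∈ Set.Ioo (-1 : ℝ) 1) :
    ∃ s : ℂ, s ≠ 0 ∧
      Tendsto (fun ε : ℝ => S ((x : ℂ) + ε * I)) (𝓝[>] 0) (𝓝 s) ∧
      Tendsto (fun ε : ℝ => S ((x : ℂ) - ε * I)) (𝓝[>] 0) (𝓝 (-s)) := by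
  obtain ⟨hx1, hx2⟩ := hx
  have hre : ((x : ℂ) - 1).re < 0 := by simpa using hx2
  have him : ((x : ℂ) - 1).im = 0 := by simp
  have hne (ε : ℝ) (hε : 0 < ε) : (x : ℂ) + ε * I - 1 ≠ 0 := fun h => by
    have := congrArg Complex.im h; simp at this; exact hε.ne' this
  have hne' (ε : ℝ) (hε : 0 < ε) : (x : ℂ) - ε * I - 1 ≠ 0 := fun h => by
    have := congrArg Complex.im h; simp at this; exact hε.ne' this
  have hup : Tendsto (fun ε : ℝ => (x : ℂ) + ε * I) (𝓝[>] 0) (𝓝 x) := by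
    have : Continuous fun ε : ℝ => (x : ℂ) + ε * I := by fun_prop
    simpa using (this.tendsto 0).mono_left nhdsWithin_le_nhds
  have hdn : Tendsto (fun ε : ℝ => (x : ℂ) - ε * I) (𝓝[>] 0) (𝓝 x) := by
    have : Continuous fun ε : ℝ => (x : ℂ) - ε * I := by fun_prop
    simpa using (this.tendsto 0).mono_left nhdsWithin_le_nhds
  have hpos : (x : ℂ) + 1 ∈ slitPlane := Or.inl (by simp; linarith)
  have hc : ContinuousAt (fun u : ℂ => u ^ (1 / 2 : ℂ)) ((x : ℂ) + 1) :=
    continuousAt_cpow_const hpos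
  have hlup : Tendsto (fun ε : ℝ => log ((x : ℂ) + ε * I - 1)) (𝓝[>] 0)
      (𝓝 (Real.log ‖(x : ℂ) - 1‖ + Real.pi * I)) := by
    refine (tendsto_log_nhdsWithin_im_nonneg_of_re_neg_of_im_zero hre him).comp
      (tendsto_nhdsWithin_iff.2 ⟨hup.sub_const 1, ?_⟩)
    filter_upwards [self_mem_nhdsWithin] with ε hε
    simpa using le_of_lt hε
  have hldn : Tendsto (fun ε : ℝ => log ((x : ℂ) - ε * I - 1)) (𝓝[>] 0)
      (𝓝 (Real.log ‖(x : ℂ) - 1‖ - Real.pi * I)) := by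
    refine (tendsto_log_nhdsWithin_im_neg_of_re_neg_of_im_zero hre him).comp
      (tendsto_nhdsWithin_iff.2 ⟨hdn.sub_const 1, ?_⟩)
    filter_upwards [self_mem_nhdsWithin] with ε hε
    simpa using hε
  refine ⟨exp ((Real.log ‖(x : ℂ) - 1‖ + Real.pi * I) * (1 / 2)) * ((x : ℂ) + 1) ^ (1 / 2 : ℂ),
    mul_ne_zero (exp_ne_zero _) ?_, ?_, ?_⟩
  · simp [cpow_eq_zero_iff, slitPlane_ne_zero hpos]
  · refine Tendsto.congr' ?_ (((continuous_exp.tendsto _).comp (hlup.mul_const (1 / 2))).mul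
      (hc.tendsto.comp (hup.add_const 1)))
    filter_upwards [self_mem_nhdsWithin] with ε hε
    simp only [S, Function.comp, cpow_def_of_ne_zero (hne ε hε)]
  · -- The two limits of the logarithm differ by `2πi`, so half of it changes the sign of `exp`.
    have hneg : exp ((Real.log ‖(x : ℂ) - 1‖ - Real.pi * I) * (1 / 2)) =
        -exp ((Real.log ‖(x : ℂ) - 1‖ + Real.pi * I) * (1 / 2)) := by
      rw [← exp_sub_pi_mul_I]
      congr 1
      ring
    rw [← neg_mul, ← hneg]
    refine Tendsto.congr' ?_ (((continuous_exp.tendsto _).comp (hldn.mul_const (1 / 2))).mul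
      (hc.tendsto.comp (hdn.add_const 1)))
    filter_upwards [self_mem_nhdsWithin] with ε hε
    simp only [S, Function.comp, cpow_def_of_ne_zero (hne' ε hε)]

/-- (i) `z·w_λ(z) → 1` as `|z| → ∞`; (ii) for `x ∈ (−1,1)`, the boundary values satisfy
`w_{λ,+}(x) + w_{λ,−}(x) = −iλ = V′(x)`. -/
theorem stmt13 (lam : ℝ) (hlam : 0 ≤ lam) :
    Filter.Tendsto (fun z : ℂ => z * wCauchy lam z) (Bornology.cobounded ℂ) (nhds 1) ∧
    ∀ x ∈ Set.Ioo (-1 : ℝ) 1,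
      Filter.Tendsto
        (fun ε : ℝ =>
          wCauchy lam ((x : ℂ) + ε * Complex.I) + wCauchy lam ((x : ℂ) - ε * Complex.I))
        (nhdsWithin 0 (Set.Ioi 0))
        (nhds (-Complex.I * (lam : ℂ))) := by
  refine ⟨tendsto_mul_wCauchy lam, fun x hx => ?_⟩
  obtain ⟨s, hs, hup, hdn⟩ := exists_tendsto_S x hx
  have hnum (g : ℝ → ℂ) (hg : Continuous g) (h0 : g 0 = x) :
      Tendsto (fun ε => 2 + I * (lam : ℂ) * g ε) (𝓝[>] 0) (𝓝 (2 + I * lam * x)) := by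
    have : Continuous fun ε => 2 + I * (lam : ℂ) * g ε := by fun_prop
    simpa [h0] using (this.tendsto 0).mono_left nhdsWithin_le_nhds
  have h1 := ((hnum (fun ε => (x : ℂ) + ε * I) (by fun_prop) (by simp)).div
    (hup.const_mul 2) (by simpa using hs)).const_add (-I * (lam : ℂ) / 2)
  have h2 := ((hnum (fun ε => (x : ℂ) - ε * I) (by fun_prop) (by simp)).div
    (hdn.const_mul 2) (by simpa using hs)).const_add (-I * (lam : ℂ) / 2)
  have h := h1.add h2
  rw [show -I * (lam : ℂ) / 2 + (2 + I * lam * x) / (2 * s) +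
    (-I * (lam : ℂ) / 2 + (2 + I * lam * x) / (2 * -s)) = -I * lam by field_simp; ring] at h
  exact h
end

section
/- Fix λ ≥ 0 and define w_λ(z) = −iλ/2 + (2 + iλz)/(2·S(z)) for z ∈ ℂ∖[−1,1]. Then for every x ∈ (−1, 1), the Sokhotski–Plemelj jump of w_λ recovers the equilibrium density: lim_{ε→0⁺} ( −(1/(2πi))·( w_λ(x + iε) − w_λ(x − iε) ) ) = (2 + iλx)/(2π·√(1 − x²)). -/
/-- Approach to `a` along the vertical ray in direction `s * I`. Both sides of the cut are treated
at once, `s = 1` being the upper side and `s = -1` the lower one. -/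
lemma tendsto_vertical (a s : ℝ) :
    Filter.Tendsto (fun ε : ℝ => (a : ℂ) + s * ε * Complex.I)
      (nhdsWithin 0 (Set.Ioi 0)) (nhds (a : ℂ)) := by
  have h : Continuous (fun ε : ℝ => (a : ℂ) + s * ε * Complex.I) := by fun_prop
  simpa using (h.tendsto 0).mono_left nhdsWithin_le_nhds

/-- Boundary values of the principal square root on the two sides of the negative real axis. -/
lemma tendsto_cpow_half_of_neg {a s : ℝ} (ha : a < 0) (hs : s = 1 ∨ s = -1) :
    Filter.Tendsto (fun ε : ℝ => ((a : ℂ) + s * ε * Complex.I) ^ (1 / 2 : ℂ))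
      (nhdsWithin 0 (Set.Ioi 0)) (nhds (s * Complex.I * (Real.sqrt (-a) : ℂ))) := by
  have hlog : Filter.Tendsto (fun ε : ℝ => Complex.log ((a : ℂ) + s * ε * Complex.I))
      (nhdsWithin 0 (Set.Ioi 0))
      (nhds ((Real.log (-a) : ℂ) + s * (Real.pi * Complex.I))) := by
    have hv := tendsto_vertical a s
    rcases hs with rfl | rfl
    · have h := (Complex.tendsto_log_nhdsWithin_im_nonneg_of_re_neg_of_im_zero
        (z := (a : ℂ)) (by simpa using ha) (by simp)).comp
        (tendsto_nhdsWithin_iff.2 ⟨hv, by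
          filter_upwards [self_mem_nhdsWithin] with ε hε
          simpa using le_of_lt hε⟩)
      simpa [Function.comp_def, abs_of_neg ha] using h
    · have h := (Complex.tendsto_log_nhdsWithin_im_neg_of_re_neg_of_im_zero
        (z := (a : ℂ)) (by simpa using ha) (by simp)).comp
        (tendsto_nhdsWithin_iff.2 ⟨hv, by
          filter_upwards [self_mem_nhdsWithin] with ε hε
          simpa using hε⟩)
      simpa [Function.comp_def, abs_of_neg ha, sub_eq_add_neg] using h
  have hexp := (Complex.continuous_exp.tendsto _).comp (hlog.mul_const (1 / 2 : ℂ))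
  have hval : Complex.exp (((Real.log (-a) : ℂ) + s * (Real.pi * Complex.I)) * (1 / 2 : ℂ))
      = s * Complex.I * (Real.sqrt (-a) : ℂ) := by
    have hsqrt : Complex.exp ((Real.log (-a) : ℂ) * (1 / 2)) = (Real.sqrt (-a) : ℂ) := by
      rw [Real.sqrt_eq_rpow, Real.rpow_def_of_pos (by linarith)]
      push_cast
      rfl
    have hrot : Complex.exp (s * (Real.pi / 2 * Complex.I)) = s * Complex.I := by
      rcases hs with rfl | rfl
      · simp [Complex.exp_pi_div_two_mul_I]
      · simp [Complex.exp_neg, Complex.exp_pi_div_two_mul_I]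
    rw [← hsqrt, ← hrot, ← Complex.exp_add]
    congr 1
    ring
  rw [hval] at hexp
  refine hexp.congr' ?_
  have hne : ∀ᶠ ε : ℝ in nhdsWithin 0 (Set.Ioi 0), (a : ℂ) + s * ε * Complex.I ≠ 0 :=
    (tendsto_vertical a s).eventually_ne (by exact_mod_cast ha.ne)
  filter_upwards [hne] with ε hε
  simp only [Function.comp_apply]
  rw [Complex.cpow_def_of_ne_zero hε]

lemma tendsto_S {x s : ℝ} (hx : x ∈ Set.Ioo (-1 : ℝ) 1) (hs : s = 1 ∨ s = -1) :
    Filter.Tendsto (fun ε : ℝ => S ((x : ℂ) + s * ε * Complex.I))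
      (nhdsWithin 0 (Set.Ioi 0)) (nhds (s * Complex.I * (Real.sqrt (1 - x ^ 2) : ℂ))) := by
  obtain ⟨h1, h2⟩ := hx
  have hminus := tendsto_cpow_half_of_neg (a := x - 1) (by linarith) hs
  have hplus : Filter.Tendsto (fun ε : ℝ => (((x + 1 : ℝ) : ℂ) + s * ε * Complex.I) ^ (1 / 2 : ℂ))
      (nhdsWithin 0 (Set.Ioi 0)) (nhds (Real.sqrt (x + 1) : ℂ)) := by
    have hc : ContinuousAt (fun z : ℂ => z ^ (1 / 2 : ℂ)) ((x + 1 : ℝ) : ℂ) :=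
      continuousAt_id.cpow continuousAt_const
        (Complex.ofReal_mem_slitPlane.2 (by linarith))
    have hval : (((x + 1 : ℝ) : ℂ)) ^ (1 / 2 : ℂ) = (Real.sqrt (x + 1) : ℂ) := by
      rw [Real.sqrt_eq_rpow, Complex.ofReal_cpow (by linarith)]
      push_cast
      rfl
    rw [← hval]
    exact hc.tendsto.comp (tendsto_vertical (x + 1) s)
  have hprod := hminus.mul hplus
  have hsqrt : Real.sqrt (1 - x ^ 2) = Real.sqrt (-(x - 1)) * Real.sqrt (x + 1) := by
    rw [← Real.sqrt_mul (by linarith)]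
    congr 1
    ring
  rw [hsqrt]
  push_cast at hprod ⊢
  rw [← mul_assoc]
  refine hprod.congr fun ε => ?_
  unfold S
  congr 2 <;> ring

lemma tendsto_wCauchy (lam : ℝ) {x s : ℝ} (hx : x ∈ Set.Ioo (-1 : ℝ) 1) (hs : s = 1 ∨ s = -1) :
    Filter.Tendsto (fun ε : ℝ => wCauchy lam ((x : ℂ) + s * ε * Complex.I))
      (nhdsWithin 0 (Set.Ioi 0))
      (nhds (-Complex.I * (lam : ℂ) / 2 + (2 + Complex.I * (lam : ℂ) * x) /
        (2 * (s * Complex.I * (Real.sqrt (1 - x ^ 2) : ℂ))))) := by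
  have hpos : 0 < Real.sqrt (1 - x ^ 2) := Real.sqrt_pos.2 (by nlinarith [hx.1, hx.2])
  have hr : (Real.sqrt (1 - x ^ 2) : ℂ) ≠ 0 := by exact_mod_cast hpos.ne'
  have hs0 : (s : ℂ) ≠ 0 := by rcases hs with rfl | rfl <;> simp
  unfold wCauchy
  exact ((((tendsto_vertical x s).const_mul _).const_add _).div
    ((tendsto_S hx hs).const_mul 2)
    (mul_ne_zero two_ne_zero (mul_ne_zero (mul_ne_zero hs0 Complex.I_ne_zero) hr))).const_add _

/-- The Sokhotski–Plemelj jump of `w_λ` across `(−1,1)` recovers the equilibrium density: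
`−(1/(2πi))(w_{λ,+}(x) − w_{λ,−}(x)) = (2 + iλx)/(2π√(1 − x²))`. -/
theorem stmt14 (lam : ℝ) (hlam : 0 ≤ lam) :
    ∀ x ∈ Set.Ioo (-1 : ℝ) 1,
      Filter.Tendsto
        (fun ε : ℝ => -(1 / (2 * (Real.pi : ℂ) * Complex.I)) *
          (wCauchy lam ((x : ℂ) + ε * Complex.I) - wCauchy lam ((x : ℂ) - ε * Complex.I)))
        (nhdsWithin 0 (Set.Ioi 0))
        (nhds ((2 + Complex.I * (lam : ℂ) * (x : ℂ)) /
          (2 * (Real.pi : ℂ) * (Real.sqrt (1 - x ^ 2) : ℂ)))) := by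
  intro x hx
  have hpos : 0 < Real.sqrt (1 - x ^ 2) := Real.sqrt_pos.2 (by nlinarith [hx.1, hx.2])
  have hr : (Real.sqrt (1 - x ^ 2) : ℂ) ≠ 0 := by exact_mod_cast hpos.ne'
  have hpi : (Real.pi : ℂ) ≠ 0 := by exact_mod_cast Real.pi_ne_zero
  have h := ((tendsto_wCauchy lam hx (s := 1) (Or.inl rfl)).sub
    (tendsto_wCauchy lam hx (s := -1) (Or.inr rfl))).const_mul
      (-(1 / (2 * (Real.pi : ℂ) * Complex.I)))
  convert h using 1
  · funext ε
    push_cast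
    ring_nf
  · congr 1
    have hI : Complex.I ≠ 0 := Complex.I_ne_zero
    push_cast
    generalize (Real.sqrt (1 - x ^ 2) : ℂ) = r at hr ⊢
    field_simp
    rw [Complex.I_sq]
    ring
end

section
/- Fix ω > 0 and define the Szegő function D(z) = exp( iω/(2·(z + S(z))) ) for z ∈ ℂ∖[−1,1]. Then: (i) D(z) → 1 as |z| → ∞; and (ii) for every x ∈ (−1, 1), lim_{ε→0⁺} D(x + iε)·D(x − iε) = e^{iωx}, i.e., the boundary values of D from above and below the cut multiply to the weight function e^{iωx}. -/
/-- The Szegő function `D(z) = exp(iω/(2(z + S(z))))` of the weight `e^{iωx}`. -/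
noncomputable def Szego (ω : ℝ) (z : ℂ) : ℂ :=
  Complex.exp (Complex.I * (ω : ℂ) / (2 * (z + S z)))

lemma half_sq (w : ℂ) : (w ^ (1 / 2 : ℂ)) ^ 2 = w := by
  rw [one_div]
  exact_mod_cast Complex.cpow_nat_inv_pow w (n := 2) two_ne_zero

lemma S_sq (z : ℂ) : S z ^ 2 = z ^ 2 - 1 := by
  rw [S, mul_pow, half_sq, half_sq]; ring

lemma add_S_mul_sub_S (z : ℂ) : (z + S z) * (z - S z) = 1 := by
  linear_combination -S_sq z

lemma Szego_eq (ω : ℝ) (z : ℂ) :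
    Szego ω z = Complex.exp (Complex.I * (ω : ℂ) * (z - S z) / 2) := by
  have h := add_S_mul_sub_S z
  have h0 : z + S z ≠ 0 := left_ne_zero_of_mul_eq_one h
  rw [Szego, eq_div_of_mul_eq h0 ((mul_comm _ _).trans h)]
  congr 1
  field_simp

/-- The principal square root in Cartesian form, on the closed upper half-plane. -/
lemma half_of_nonneg {w : ℂ} (h : 0 ≤ w.im) :
    w ^ (1 / 2 : ℂ) = ⟨√((‖w‖ + w.re) / 2), √((‖w‖ - w.re) / 2)⟩ := by
  rw [one_div]
  apply Complex.ext
  · exact Complex.cpow_inv_two_re w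
  · exact Complex.cpow_inv_two_im_eq_sqrt h

/-- The principal square root in Cartesian form, on the open lower half-plane. -/
lemma half_of_neg {w : ℂ} (h : w.im < 0) :
    w ^ (1 / 2 : ℂ) = ⟨√((‖w‖ + w.re) / 2), -√((‖w‖ - w.re) / 2)⟩ := by
  rw [one_div]
  apply Complex.ext
  · exact Complex.cpow_inv_two_re w
  · exact Complex.cpow_inv_two_im_eq_neg_sqrt h

/-- The square roots of two numbers with equal imaginary parts lie in a common closed quadrant,
so the angle between them is at most `π / 2`. -/
lemma half_inner_nonneg {v w : ℂ} (h : v.im = w.im) :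
    0 ≤ (v ^ (1 / 2 : ℂ)).re * (w ^ (1 / 2 : ℂ)).re
      + (v ^ (1 / 2 : ℂ)).im * (w ^ (1 / 2 : ℂ)).im := by
  rcases le_or_gt 0 w.im with hw | hw
  · rw [half_of_nonneg hw, half_of_nonneg (h ▸ hw)]
    positivity
  · rw [half_of_neg hw, half_of_neg (h ▸ hw)]
    simp only [neg_mul_neg]
    positivity

lemma norm_le_norm_add_S (z : ℂ) : ‖z‖ ≤ ‖z + S z‖ := by
  have hin := half_inner_nonneg (v := z - 1) (w := z + 1) (by simp)
  have ha := half_sq (z - 1)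
  have hb := half_sq (z + 1)
  rw [S]
  set a := (z - 1) ^ (1 / 2 : ℂ)
  set b := (z + 1) ^ (1 / 2 : ℂ)
  have h1 : 2 * (z + a * b) = (a + b) ^ 2 := by linear_combination -ha - hb
  have h2 : 2 * z = a ^ 2 + b ^ 2 := by linear_combination -ha - hb
  have h3 : 2 * ‖z + a * b‖ = ‖a + b‖ ^ 2 := by rw [← norm_pow, ← h1]; simp
  have h4 : 2 * ‖z‖ ≤ ‖a‖ ^ 2 + ‖b‖ ^ 2 := by
    rw [← norm_pow, ← norm_pow]
    calc 2 * ‖z‖ = ‖a ^ 2 + b ^ 2‖ := by rw [← h2]; simp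
      _ ≤ _ := norm_add_le _ _
  have h5 : ‖a‖ ^ 2 + ‖b‖ ^ 2 ≤ ‖a + b‖ ^ 2 := by
    simp only [Complex.sq_norm, Complex.normSq_apply, Complex.add_re, Complex.add_im]
    linarith
  linarith

/-- The boundary values of `S` from above and below the cut are opposite. -/
lemma tendsto_S_add_S {x : ℝ} (hx : x ∈ Set.Ioo (-1 : ℝ) 1) :
    Filter.Tendsto (fun ε : ℝ => S ((x : ℂ) + ε * Complex.I) + S ((x : ℂ) - ε * Complex.I))
      (nhdsWithin 0 (Set.Ioi 0)) (nhds 0) := by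
  -- the length of `t ± iε`
  let n : ℝ → ℝ → ℝ := fun t ε => √(t ^ 2 + ε ^ 2)
  let f : ℝ → ℝ := fun ε =>
    2 * (√((n (x - 1) ε + (x - 1)) / 2) * √((n (x + 1) ε + (x + 1)) / 2)
      - √((n (x - 1) ε - (x - 1)) / 2) * √((n (x + 1) ε - (x + 1)) / 2))
  have hf : Continuous f := by fun_prop
  have hf0 : f 0 = 0 := by
    have h1 : n (x - 1) 0 = -(x - 1) := by
      simp only [n]
      rw [← Real.sqrt_sq (by linarith [hx.2] : 0 ≤ -(x - 1))]
      congr 1; ring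
    have h2 : n (x + 1) 0 = x + 1 := by
      simp [n, Real.sqrt_sq (by linarith [hx.1] : 0 ≤ x + 1)]
    simp only [f, h1, h2]
    simp
  have hup : ∀ t ε : ℝ, 0 < ε → ((t : ℂ) + ε * Complex.I) ^ (1 / 2 : ℂ) =
      ⟨√((n t ε + t) / 2), √((n t ε - t) / 2)⟩ := by
    intro t ε hε
    rw [half_of_nonneg (by simp [hε.le]), Complex.norm_add_mul_I]
    simp [n]
  have hdown : ∀ t ε : ℝ, 0 < ε → ((t : ℂ) - ε * Complex.I) ^ (1 / 2 : ℂ) =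
      ⟨√((n t ε + t) / 2), -√((n t ε - t) / 2)⟩ := by
    intro t ε hε
    have hn : ‖(t : ℂ) - ε * Complex.I‖ = n t ε := by
      have := Complex.norm_add_mul_I t (-ε)
      simpa [n, sub_eq_add_neg] using this
    rw [half_of_neg (by simp [hε]), hn]
    simp
  have hlim : Filter.Tendsto (fun ε => (f ε : ℂ)) (nhdsWithin 0 (Set.Ioi 0)) (nhds 0) := by
    have h := (Complex.continuous_ofReal.comp hf).tendsto 0
    simp only [Function.comp, hf0, Complex.ofReal_zero] at h
    exact h.mono_left nhdsWithin_le_nhds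
  refine hlim.congr' ?_
  filter_upwards [self_mem_nhdsWithin] with ε hε
  have e1 : (x : ℂ) + ε * Complex.I - 1 = ((x - 1 : ℝ) : ℂ) + ε * Complex.I := by push_cast; ring
  have e2 : (x : ℂ) + ε * Complex.I + 1 = ((x + 1 : ℝ) : ℂ) + ε * Complex.I := by push_cast; ring
  have e3 : (x : ℂ) - ε * Complex.I - 1 = ((x - 1 : ℝ) : ℂ) - ε * Complex.I := by push_cast; ring
  have e4 : (x : ℂ) - ε * Complex.I + 1 = ((x + 1 : ℝ) : ℂ) - ε * Complex.I := by push_cast; ring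
  rw [S, S, e1, e2, e3, e4, hup _ _ hε, hup _ _ hε, hdown _ _ hε, hdown _ _ hε]
  apply Complex.ext
  · simp only [Complex.ofReal_re, Complex.add_re, Complex.mul_re, f]; ring
  · simp only [Complex.ofReal_im, Complex.add_im, Complex.mul_im]; ring

/-- (i) `D(z) → 1` as `|z| → ∞`; (ii) for `x ∈ (−1,1)`, the boundary values of `D` from
above and below the cut multiply to the weight: `D₊(x)·D₋(x) = e^{iωx}`. -/
theorem stmt15 (ω : ℝ) (hω : 0 < ω) :
    Filter.Tendsto (Szego ω) (Bornology.cobounded ℂ) (nhds 1) ∧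
    ∀ x ∈ Set.Ioo (-1 : ℝ) 1,
      Filter.Tendsto
        (fun ε : ℝ => Szego ω ((x : ℂ) + ε * Complex.I) * Szego ω ((x : ℂ) - ε * Complex.I))
        (nhdsWithin 0 (Set.Ioi 0))
        (nhds (Complex.exp (Complex.I * (ω : ℂ) * (x : ℂ)))) := by
  constructor
  · have hcob : Filter.Tendsto (fun z : ℂ => z + S z) (Bornology.cobounded ℂ)
        (Bornology.cobounded ℂ) := by
      rw [← tendsto_norm_atTop_iff_cobounded]
      exact Filter.tendsto_atTop_mono norm_le_norm_add_S tendsto_norm_cobounded_atTop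
    have hinv := (Filter.tendsto_inv₀_cobounded.comp hcob).const_mul (Complex.I * (ω : ℂ) / 2)
    rw [mul_zero] at hinv
    have h := (Complex.continuous_exp.tendsto 0).comp hinv
    rw [Complex.exp_zero] at h
    refine h.congr fun z => ?_
    simp only [Function.comp, Szego]
    congr 1
    rw [div_mul_eq_div_div, div_eq_mul_inv (Complex.I * (ω : ℂ) / 2)]
  · intro x hx
    have h := (tendsto_S_add_S hx).const_mul (Complex.I * (ω : ℂ) / 2)
    have h' := (Complex.continuous_exp.tendsto _).comp
      (h.const_sub (Complex.I * (ω : ℂ) * (x : ℂ)))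
    rw [mul_zero, sub_zero] at h'
    refine h'.congr fun ε => ?_
    rw [Szego_eq, Szego_eq, ← Complex.exp_add]
    simp only [Function.comp]
    congr 1
    ring
end
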